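/- Let 𝔤 be a finite-dimensional complex simple Lie algebra of type G2, and let (e,h,f) be an sl2-triple in 𝔤 such that e is a distinguished nilpotent element which is not regular. Then e satisfies property (P). -/

import Mathlib

open scoped ComplexOrder

/-- The centralizer `𝔤^e = {x ∈ 𝔤 : ⁅x, e⁆ = 0}` of an element `e`, as a Lie subalgebra. -/
def centralizer (L : Type*) [LieRing L] [LieAlgebra ℂ L] (e : L) : LieSubalgebra ℂ L where
  carrier := {x : L | ⁅x, e⁆ = 0}
  add_mem' := fun {a b} ha hb => by
    simp only [Set.mem_setOf_eq] at *
    rw [add_lie, ha, hb, add_zero]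
  zero_mem' := by simp
  smul_mem' := fun c a ha => by
    simp only [Set.mem_setOf_eq] at *
    rw [smul_lie, ha, smul_zero]
  lie_mem' := fun {a b} ha hb => by
    simp only [Set.mem_setOf_eq] at *
    simp [lie_lie, ha, hb]

/-- Membership in the centre `𝔷(𝔤^e)` of the centralizer of `e`:
`v` centralizes `e` and commutes with every element of `𝔤^e`. -/
def InCenterOfCentralizer (L : Type*) [LieRing L] [LieAlgebra ℂ L] (e v : L) : Prop :=
  ⁅v, e⁆ = 0 ∧ ∀ y : L, ⁅y, e⁆ = 0 → ⁅v, y⁆ = 0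

/-- The centre `𝔷(𝔤^e)` of the centralizer of `e`, as a subspace of `L`. -/
def zCenter (L : Type*) [LieRing L] [LieAlgebra ℂ L] (e : L) : Submodule ℂ L where
  carrier := {v : L | ⁅v, e⁆ = 0 ∧ ∀ y : L, ⁅y, e⁆ = 0 → ⁅v, y⁆ = 0}
  add_mem' := fun {a b} ha hb => ⟨by rw [add_lie, ha.1, hb.1, add_zero],
    fun y hy => by rw [add_lie, ha.2 y hy, hb.2 y hy, add_zero]⟩
  zero_mem' := ⟨zero_lie e, fun y _ => zero_lie y⟩
  smul_mem' := fun c a ha => ⟨by rw [smul_lie, ha.1, smul_zero],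
    fun y hy => by rw [smul_lie, ha.2 y hy, smul_zero]⟩

/-- Property (P) for an `sl₂`-triple `(e, h, f)`: for every nonzero `v ∈ 𝔷(𝔤^e)`, the
eigenspace `𝔷_max` of the restriction of `ad h` to `𝔷(𝔤^e)` for its largest eigenvalue is
contained in `[[f, 𝔤^e], v] = {⁅⁅f, x⁆, v⁆ : x ∈ 𝔤^e}`. -/
def PropertyP (L : Type*) [LieRing L] [LieAlgebra ℂ L] (e h f : L) : Prop :=
  ∀ m : ℂ,
    (∃ z : L, z ≠ 0 ∧ InCenterOfCentralizer L e z ∧ ⁅h, z⁆ = m • z) →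
    (∀ m' : ℂ, (∃ z : L, z ≠ 0 ∧ InCenterOfCentralizer L e z ∧ ⁅h, z⁆ = m' • z) → m' ≤ m) →
    ∀ v : L, InCenterOfCentralizer L e v → v ≠ 0 →
      ∀ z : L, InCenterOfCentralizer L e z → ⁅h, z⁆ = m • z →
        ∃ x : L, ⁅x, e⁆ = 0 ∧ ⁅⁅f, x⁆, v⁆ = z

/-- The stabilizer `{x ∈ 𝔮 : ξ(⁅x, y⁆) = 0 for all y ∈ 𝔮}` of a linear functional `ξ`. -/
def coadStab (Q : Type*) [LieRing Q] [LieAlgebra ℂ Q] (ξ : Module.Dual ℂ Q) : Submodule ℂ Q where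
  carrier := {x : Q | ∀ y : Q, ξ ⁅x, y⁆ = 0}
  add_mem' := fun {a b} ha hb y => by rw [add_lie, map_add, ha y, hb y, add_zero]
  zero_mem' := fun y => by rw [zero_lie, map_zero]
  smul_mem' := fun c a ha y => by rw [smul_lie, map_smul, ha y, smul_zero]

/-- The index of a complex Lie algebra:
`ind 𝔮 = min_{ξ ∈ 𝔮*} dim {x ∈ 𝔮 : ξ(⁅x, y⁆) = 0 for all y ∈ 𝔮}`. -/
noncomputable def lieIndex (Q : Type*) [LieRing Q] [LieAlgebra ℂ Q] : ℕ :=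
  ⨅ ξ : Module.Dual ℂ Q, Module.finrank ℂ ↥(coadStab Q ξ)

/-- A nilpotent element `e` is distinguished if the only `x ∈ 𝔤^e` such that `ad x` is a
semisimple endomorphism of `𝔤` is `x = 0`. -/
def IsDistinguished (L : Type*) [LieRing L] [LieAlgebra ℂ L] (e : L) : Prop :=
  ∀ x : L, ⁅x, e⁆ = 0 → (LieAlgebra.ad ℂ L x).IsSemisimple → x = 0

/-!
Write `𝔤ₖ` for the `k`-eigenspace of `ad h` and `dₖ` for its dimension, and use `dim 𝔤 = 14`. A
vector of `𝔤^e` in `𝔤₀` commutes with `f` too and is orthogonal to `𝔤` for the Killing form, because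
every element of `𝔤^e` is `ad`-nilpotent when `e` is distinguished; hence it vanishes and `d₂ = d₀`.
The identity `14 + d₀ = 2 (d₀ + d₁ + d₂ + ⋯)` then leaves `d₀ = 2` or `d₀ = 4`.

If `d₀ = 2`, then `h` is regular and `𝔤₀` is a Cartan subalgebra. In a root system of rank two, two
roots of height 2 force all heights to be even, so `d₁ = 0` and `dim 𝔤^e = d₀ + d₁ = 2`: `e` is
regular.

If `d₀ = 4`, the weights are `0, ±2, ±4` and `𝔤₄ = ℂ z` is a line. A vector of `𝔤₂` killed by `𝔤₂`
would be a highest weight vector below `𝔤₄`, which simplicity forbids; so the bracket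
`𝔤₂ × 𝔤₂ → 𝔤₄` is nondegenerate, and this forces `𝔷(𝔤^e) = ℂ e + ℂ z`. There property (P) follows
from `⁅f, e⁆ = -h` and `⁅⁅f, z⁆, e⁆ = -4 z`.
-/

open Module Polynomial

section Eigenvalues

variable {K : Type*} [Field K]

lemma isNilpotent_of_mul_sub_mul_eq_smul [CharZero K] {A : Type*} [Ring A] [Algebra K A]
    [FiniteDimensional K A] {a b : A} {c : K} (hc : c ≠ 0) (hab : a * b - b * a = c • b) :
    IsNilpotent b := by
  have hpow (n : ℕ) : a * b ^ n - b ^ n * a = ((n : K) * c) • b ^ n := by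
    induction n with
    | zero => simp
    | succ n ih =>
      calc a * b ^ (n + 1) - b ^ (n + 1) * a
          = (a * b ^ n - b ^ n * a) * b + b ^ n * (a * b - b * a) := by rw [pow_succ]; noncomm_ring
        _ = (((n + 1 : ℕ) : K) * c) • b ^ (n + 1) := by
          rw [ih, hab, smul_mul_assoc, mul_smul_comm, ← pow_succ, ← add_smul]
          push_cast; ring_nf
  by_contra hb
  have hval (n : ℕ) : End.HasEigenvalue
      (LinearMap.mulLeft K a - LinearMap.mulRight K a) ((n : K) * c) :=
    End.hasEigenvalue_of_hasEigenvector (x := b ^ n)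
      ⟨End.mem_eigenspace_iff.2 (hpow n), fun h => hb ⟨n, h⟩⟩
  exact Set.infinite_range_of_injective
    (fun m n hmn => Nat.cast_injective (mul_right_cancel₀ hc hmn))
    ((End.finite_hasEigenvalue (LinearMap.mulLeft K a - LinearMap.mulRight K a)).subset
      (Set.range_subset_iff.2 hval))

lemma mem_iSup_eigenspace_of_aeval_prod_eq_zero {V ι : Type*} [AddCommGroup V] [Module K V]
    {T : End K V} {c : ι → K} (hc : Function.Injective c) {s : Finset ι} {v : V}
    (hv : aeval T (∏ i ∈ s, (X - C (c i))) v = 0) : v ∈ ⨆ i, T.eigenspace (c i) := by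
  classical
  suffices LinearMap.ker (aeval T (∏ i ∈ s, (X - C (c i)))) ≤ ⨆ i, T.eigenspace (c i) from
    this hv
  clear hv
  induction s using Finset.induction_on with
  | empty => simp [Module.End.one_eq_id]
  | insert i s hi ih =>
    have hcop : IsCoprime (X - C (c i)) (∏ j ∈ s, (X - C (c j))) :=
      IsCoprime.prod_right fun j hj => isCoprime_X_sub_C_of_isUnit_sub <| IsUnit.mk0 _ <|
        sub_ne_zero.2 <| hc.ne <| by rintro rfl; exact hi hj
    rw [Finset.prod_insert hi, ← sup_ker_aeval_eq_ker_aeval_mul_of_coprime _ hcop]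
    refine sup_le (fun w hw => ?_) ih
    refine Submodule.mem_iSup_of_mem i (End.mem_eigenspace_iff.2 ?_)
    simpa [sub_eq_zero] using hw

lemma isCompl_of_disjoint_ker_range {V : Type*} [AddCommGroup V] [Module K V]
    [FiniteDimensional K V] {S T : End K V} (hST : Disjoint (LinearMap.ker S) (LinearMap.range T))
    (hTS : Disjoint (LinearMap.ker T) (LinearMap.range S)) :
    IsCompl (LinearMap.ker S) (LinearMap.range T) := by
  refine (Submodule.isCompl_iff_disjoint _ _ ?_).2 hST
  have hle := Submodule.finrank_add_finrank_le_of_disjoint hTS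
  have hS := LinearMap.finrank_range_add_finrank_ker S
  have hT := LinearMap.finrank_range_add_finrank_ker T
  omega

end Eigenvalues

section FinrankISup

variable {K V ι : Type*} [Field K] [AddCommGroup V] [Module K V] [FiniteDimensional K V]
  {p : ι → Submodule K V}

lemma finrank_biSup_eq_sum (hp : iSupIndep p) (s : Finset ι) :
    finrank K ↥(⨆ i ∈ s, p i) = ∑ i ∈ s, finrank K (p i) := by
  classical
  induction s using Finset.induction_on with
  | empty => simp
  | insert i s hi ih =>
    have hdisj : p i ⊓ ⨆ j ∈ s, p j = ⊥ := (hp.disjoint_biSup hi).eq_bot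
    have hsup := Submodule.finrank_sup_add_finrank_inf_eq (p i) (⨆ j ∈ s, p j)
    rw [hdisj, finrank_bot, add_zero] at hsup
    rw [Finset.iSup_insert, Finset.sum_insert hi, hsup, ih]

lemma finrank_iSup_eq_sum (hp : iSupIndep p) {s : Finset ι} (hs : ∀ i ∉ s, p i = ⊥) :
    finrank K ↥(⨆ i, p i) = ∑ i ∈ s, finrank K (p i) := by
  have hsup : ⨆ i, p i = ⨆ i ∈ s, p i := by
    refine le_antisymm (iSup_le fun i => ?_) (iSup₂_le fun i _ => le_iSup p i)
    by_cases hi : i ∈ s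
    · exact le_iSup₂_of_le i hi le_rfl
    · simp [hs i hi]
  rw [hsup, finrank_biSup_eq_sum hp]

end FinrankISup

section Sl2

open LieModule

variable {K L M : Type*} [Field K] [LieRing L] [LieAlgebra K L]
  [AddCommGroup M] [Module K M] [LieRingModule L M] [LieModule K L M] {h e f : L}

variable (K) in
lemma lie_h_lie_e (t : IsSl2Triple h e f) (v : M) :
    ⁅h, ⁅e, v⁆⁆ = ⁅e, ⁅h, v⁆⁆ + (2 : K) • ⁅e, v⁆ := by
  rw [leibniz_lie, t.lie_h_e_smul K, smul_lie, add_comm]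

variable (K) in
lemma lie_h_lie_f (t : IsSl2Triple h e f) (v : M) :
    ⁅h, ⁅f, v⁆⁆ = ⁅f, ⁅h, v⁆⁆ - (2 : K) • ⁅f, v⁆ := by
  rw [leibniz_lie, t.lie_lie_smul_f K, neg_lie, smul_lie]
  abel

lemma lie_e_lie_f (t : IsSl2Triple h e f) (v : M) : ⁅e, ⁅f, v⁆⁆ = ⁅f, ⁅e, v⁆⁆ + ⁅h, v⁆ := by
  rw [leibniz_lie, t.lie_e_f, add_comm]

lemma lie_e_toEnd_f_pow_succ (t : IsSl2Triple h e f) (n : ℕ) (v : M) :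
    ⁅e, (toEnd K L M f ^ (n + 1)) v⁆ = (toEnd K L M f ^ (n + 1)) ⁅e, v⁆ +
      (n + 1 : K) • (toEnd K L M f ^ n) (⁅h, v⁆ - (n : K) • v) := by
  induction n generalizing v with
  | zero => simp [lie_e_lie_f t]
  | succ n ih =>
    have hf (k : ℕ) (w : M) :
        (toEnd K L M f ^ k) ⁅f, w⁆ = (toEnd K L M f ^ (k + 1)) w := by
      rw [pow_succ, Module.End.mul_apply, toEnd_apply_apply]
    rw [← hf, ih, lie_e_lie_f t, lie_h_lie_f K t]
    simp only [map_add, map_sub, map_smul, hf]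
    push_cast
    module

lemma toEnd_e_pow_toEnd_f_pow (t : IsSl2Triple h e f) (n : ℕ) {v : M}
    (hv : ⁅f, ⁅e, v⁆⁆ = 0) :
    (toEnd K L M e ^ n) ((toEnd K L M f ^ n) v) =
      (n.factorial : K) • aeval (toEnd K L M h) (∏ j ∈ Finset.range n, (X - C (j : K))) v := by
  induction n generalizing v with
  | zero => simp
  | succ n ih =>
    set w := ⁅h, v⁆ - (n : K) • v with hw
    have hstep : ⁅e, (toEnd K L M f ^ (n + 1)) v⁆ = (n + 1 : K) • (toEnd K L M f ^ n) w := by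
      rw [lie_e_toEnd_f_pow_succ t, pow_succ, Module.End.mul_apply, toEnd_apply_apply, hv, map_zero,
        zero_add]
    have hfew : ⁅f, ⁅e, w⁆⁆ = 0 := by
      have hfehv : ⁅f, ⁅e, ⁅h, v⁆⁆⁆ = 0 := by
        rw [← sub_eq_iff_eq_add.2 (lie_h_lie_e K t v), lie_sub, lie_smul, hv, smul_zero, sub_zero,
          ← add_eq_of_eq_sub' (lie_h_lie_f K t ⁅e, v⁆), hv, lie_zero, smul_zero, add_zero]
      rw [hw, lie_sub, lie_sub, hfehv, lie_smul, lie_smul, hv, smul_zero, sub_zero]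
    rw [pow_succ, Module.End.mul_apply, toEnd_apply_apply, hstep, map_smul, ih hfew,
      Finset.prod_range_succ, map_mul, Module.End.mul_apply, hw, Nat.factorial_succ, smul_smul]
    simp [Nat.cast_smul_eq_nsmul]

lemma toEnd_e_mem_eigenspace (t : IsSl2Triple h e f) {c : K} {v : M}
    (hv : v ∈ (toEnd K L M h).eigenspace c) :
    toEnd K L M e v ∈ (toEnd K L M h).eigenspace (c + 2) := by
  rw [End.mem_eigenspace_iff, toEnd_apply_apply] at hv ⊢
  rw [toEnd_apply_apply, lie_h_lie_e K t, hv, lie_smul, add_smul]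

section FiniteDimensional

variable [CharZero K] [FiniteDimensional K M]

variable (K M) in
lemma isNilpotent_toEnd_e (t : IsSl2Triple h e f) : IsNilpotent (toEnd K L M e) :=
  isNilpotent_of_mul_sub_mul_eq_smul (a := toEnd K L M h) (two_ne_zero (α := K)) <| by
    ext v
    simp [lie_h_lie_e K t]

lemma mem_iSup_eigenspace_toEnd_h (t : IsSl2Triple h e f) {v : M} (hv : ⁅f, ⁅e, v⁆⁆ = 0) :
    v ∈ ⨆ n : ℕ, (toEnd K L M h).eigenspace n := by
  obtain ⟨n, hn⟩ := isNilpotent_toEnd_e K M t.symm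
  refine mem_iSup_eigenspace_of_aeval_prod_eq_zero Nat.cast_injective (s := Finset.range n) ?_
  have h0 := toEnd_e_pow_toEnd_f_pow (K := K) t n hv
  rw [hn, LinearMap.zero_apply, map_zero] at h0
  exact (smul_eq_zero.1 h0.symm).resolve_left <|
    Nat.cast_ne_zero.2 n.factorial_ne_zero

lemma mem_iSup_eigenspace_neg_toEnd_h (t : IsSl2Triple h e f) {v : M} (hv : ⁅e, ⁅f, v⁆⁆ = 0) :
    v ∈ ⨆ n : ℕ, (toEnd K L M h).eigenspace (-n) := by
  have hneg (n : ℕ) :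
      (toEnd K L M (-h)).eigenspace (n : K) = (toEnd K L M h).eigenspace (-n) := by
    ext w
    simp [neg_eq_iff_eq_neg]
  simpa only [hneg] using mem_iSup_eigenspace_toEnd_h (K := K) t.symm hv

variable (K M) in
lemma disjoint_ker_toEnd_f_range_toEnd_e (t : IsSl2Triple h e f) :
    Disjoint (LinearMap.ker (toEnd K L M f)) (LinearMap.range (toEnd K L M e)) := by
  let p : ℤ → Submodule K M := fun k => (toEnd K L M h).eigenspace k
  have hp : iSupIndep p := (End.eigenspaces_iSupIndep _).comp Int.cast_injective
  have hneg : ⨆ n : ℕ, (toEnd K L M h).eigenspace (-n) ≤ ⨆ k ∈ Set.Iic 0, p k :=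
    iSup_le fun n => le_iSup₂_of_le (-n) (by simp) (by simp [p])
  have hpos : (⨆ n : ℕ, (toEnd K L M h).eigenspace n).map (toEnd K L M e) ≤
      ⨆ k ∈ Set.Ioi 0, p k := by
    rw [Submodule.map_iSup]
    refine iSup_le fun n => le_iSup₂_of_le (n + 2) (Set.mem_Ioi.2 (by positivity)) ?_
    rintro _ ⟨v, hv, rfl⟩
    simpa [p] using toEnd_e_mem_eigenspace t hv
  have hdisj :=
    hp.disjoint_biSup_biSup (s := Set.Iic 0) (t := Set.Ioi 0) (Set.Iic_disjoint_Ioi le_rfl)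
  rw [Submodule.disjoint_def]
  rintro _ hx ⟨y, rfl⟩
  rw [LinearMap.mem_ker] at hx
  have h1 : ⁅e, ⁅f, ⁅e, y⁆⁆⁆ = 0 := by simp [show ⁅f, ⁅e, y⁆⁆ = 0 from hx]
  exact Submodule.disjoint_def.1 hdisj _ (hneg (mem_iSup_eigenspace_neg_toEnd_h t h1))
    (hpos (Submodule.mem_map_of_mem (mem_iSup_eigenspace_toEnd_h t hx)))

variable (K M) in
lemma isCompl_ker_toEnd_f_range_toEnd_e (t : IsSl2Triple h e f) :
    IsCompl (LinearMap.ker (toEnd K L M f)) (LinearMap.range (toEnd K L M e)) :=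
  isCompl_of_disjoint_ker_range (disjoint_ker_toEnd_f_range_toEnd_e K M t)
    (disjoint_ker_toEnd_f_range_toEnd_e K M t.symm)

variable (K M) in
lemma iSup_eigenspace_toEnd_h (t : IsSl2Triple h e f) :
    ⨆ k : ℤ, (toEnd K L M h).eigenspace k = ⊤ := by
  set W := ⨆ k : ℤ, (toEnd K L M h).eigenspace k with hW
  have hker : LinearMap.ker (toEnd K L M f) ≤ W := fun v hv => by
    have hle : ⨆ n : ℕ, (toEnd K L M h).eigenspace (-n) ≤ W :=
      iSup_le fun n => le_iSup_of_le (-(n : ℤ)) (by simp)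
    exact hle (mem_iSup_eigenspace_neg_toEnd_h t (by simp [show ⁅f, v⁆ = 0 from hv]))
  have hmap : W.map (toEnd K L M e) ≤ W := by
    rw [hW, Submodule.map_iSup]
    refine iSup_le fun k => le_iSup_of_le (k + 2) ?_
    rintro _ ⟨v, hv, rfl⟩
    simpa using toEnd_e_mem_eigenspace t hv
  have hsup (n : ℕ) : W ⊔ LinearMap.range (toEnd K L M e ^ n) = ⊤ := by
    induction n with
    | zero => simp [Module.End.one_eq_id]
    | succ n ih =>
      have hrange : LinearMap.range (toEnd K L M e) ≤
          W ⊔ LinearMap.range (toEnd K L M e ^ (n + 1)) := by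
        rw [LinearMap.range_eq_map, ← ih, Submodule.map_sup, ← LinearMap.range_comp,
          ← Module.End.mul_eq_comp, ← pow_succ']
        exact sup_le_sup_right hmap _
      exact top_le_iff.1 <| (isCompl_ker_toEnd_f_range_toEnd_e K M t).sup_eq_top ▸
        sup_le (hker.trans le_sup_left) hrange
  obtain ⟨n, hn⟩ := isNilpotent_toEnd_e K M t
  simpa [hn] using hsup n

end FiniteDimensional
end Sl2

section WeightPiece

open LieModule

variable {K L M : Type*} [Field K] [LieRing L] [LieAlgebra K L]
  [AddCommGroup M] [Module K M] [LieRingModule L M] [LieModule K L M] {h e f : L} {j k : ℤ}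

variable (K M) in
/-- The degree `k` piece of the `ℤ`-grading of `M` by the weights of `h`: the eigenspace of the
action of `h` for the integral eigenvalue `k`. -/
def weightPiece (h : L) (k : ℤ) : Submodule K M := (toEnd K L M h).eigenspace k

lemma mem_weightPiece {v : M} : v ∈ weightPiece K M h k ↔ ⁅h, v⁆ = (k : K) • v :=
  End.mem_eigenspace_iff

lemma lie_mem_weightPiece {x : L} {v : M} (hx : x ∈ weightPiece K L h j)
    (hv : v ∈ weightPiece K M h k) : ⁅x, v⁆ ∈ weightPiece K M h (j + k) := by
  rw [mem_weightPiece] at *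
  rw [leibniz_lie, hx, hv, smul_lie, lie_smul, Int.cast_add, add_smul]

lemma self_mem_weightPiece_zero : h ∈ weightPiece K L h 0 := by simp [mem_weightPiece]

lemma e_mem_weightPiece_two (t : IsSl2Triple h e f) : e ∈ weightPiece K L h 2 := by
  simpa [mem_weightPiece] using t.lie_h_e_smul K

lemma f_mem_weightPiece_neg_two (t : IsSl2Triple h e f) : f ∈ weightPiece K L h (-2) := by
  simpa [mem_weightPiece] using t.lie_lie_smul_f K

lemma neg_mem_weightPiece {v : M} :
    v ∈ weightPiece K M (-h) k ↔ v ∈ weightPiece K M h (-k) := by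
  simp [mem_weightPiece, neg_eq_iff_eq_neg]

variable [CharZero K]

variable (K M) in
lemma iSupIndep_weightPiece (h : L) : iSupIndep (weightPiece K M h) :=
  (End.eigenspaces_iSupIndep _).comp Int.cast_injective

variable [FiniteDimensional K M]

lemma iSup_weightPiece_inf_eq (t : IsSl2Triple h e f) {p : Submodule K M}
    (hp : ∀ v ∈ p, ⁅h, v⁆ ∈ p) : ⨆ k, p ⊓ weightPiece K M h k = p := by
  set T := toEnd K L M h
  have htop : ⨆ k : ℤ, T.eigenspace k = ⊤ := iSup_eigenspace_toEnd_h K M t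
  have htop' : ⨆ c, T.eigenspace c = ⊤ :=
    top_le_iff.1 <| htop.ge.trans <| iSup_le fun k => le_iSup T.eigenspace (k : K)
  refine le_antisymm (iSup_le fun _ => inf_le_left) ?_
  refine (Submodule.eq_iSup_inf_genEigenspace (f := T) 1 hp htop').le.trans (iSup_le fun c => ?_)
  by_cases hc : ∃ k : ℤ, (k : K) = c
  · obtain ⟨k, rfl⟩ := hc
    exact le_iSup_of_le k le_rfl
  · have hdisj : Disjoint (T.eigenspace c) (⨆ k : ℤ, T.eigenspace k) :=
      (End.eigenspaces_iSupIndep T c).mono_right <| iSup_le fun k =>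
        le_iSup₂_of_le (k : K) (fun hk => hc ⟨k, hk⟩) le_rfl
    rw [htop, disjoint_top] at hdisj
    exact inf_le_right.trans (hdisj.le.trans bot_le)

lemma iSup_weightPiece (t : IsSl2Triple h e f) : ⨆ k, weightPiece K M h k = ⊤ :=
  iSup_eigenspace_toEnd_h K M t

variable (K M) in
lemma exists_weightPiece_eq_bot (h : L) :
    ∃ n : ℕ, ∀ k : ℤ, n < |k| → weightPiece K M h k = ⊥ := by
  obtain ⟨b, hb⟩ := ((WellFoundedGT.finite_ne_bot_of_iSupIndep
    (iSupIndep_weightPiece K M h)).image abs).bddAbove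
  refine ⟨b.toNat, fun k hk => ?_⟩
  by_contra hne
  have := hb (Set.mem_image_of_mem abs hne)
  omega

lemma eq_zero_of_lie_e_lie_f_eq_zero (t : IsSl2Triple h e f) (hk : 0 < k) {v : M}
    (hv : v ∈ weightPiece K M h k) (hef : ⁅e, ⁅f, v⁆⁆ = 0) : v = 0 := by
  have hdisj : Disjoint (weightPiece K M h k) (⨆ n : ℕ, (toEnd K L M h).eigenspace (-n)) :=
    (iSupIndep_weightPiece K M h k).mono_right <| iSup_le fun n : ℕ =>
      le_iSup₂_of_le (-n : ℤ) (by omega) (by simp [weightPiece])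
  exact Submodule.disjoint_def.1 hdisj v hv (mem_iSup_eigenspace_neg_toEnd_h t hef)

lemma eq_zero_of_lie_f_eq_zero (t : IsSl2Triple h e f) (hk : 0 < k) {v : M}
    (hv : v ∈ weightPiece K M h k) (hf : ⁅f, v⁆ = 0) : v = 0 :=
  eq_zero_of_lie_e_lie_f_eq_zero t hk hv (by rw [hf, lie_zero])

lemma eq_zero_of_lie_e_eq_zero (t : IsSl2Triple h e f) (hk : k < 0) {v : M}
    (hv : v ∈ weightPiece K M h k) (he : ⁅e, v⁆ = 0) : v = 0 :=
  eq_zero_of_lie_f_eq_zero t.symm (neg_pos.2 hk) (neg_mem_weightPiece.2 (by simpa)) he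

lemma exists_lie_e_eq (t : IsSl2Triple h e f) (hk : 0 < k) {v : M}
    (hv : v ∈ weightPiece K M h k) : ∃ w ∈ weightPiece K M h (k - 2), ⁅e, w⁆ = v := by
  have hf {w : M} (hw : w ∈ weightPiece K M h k) : ⁅f, w⁆ ∈ weightPiece K M h (k - 2) := by
    simpa [sub_eq_neg_add] using lie_mem_weightPiece (f_mem_weightPiece_neg_two t) hw
  have hef : Set.MapsTo (toEnd K L M e * toEnd K L M f) (weightPiece K M h k)
      (weightPiece K M h k) := fun w hw => by
    simpa using lie_mem_weightPiece (e_mem_weightPiece_two t) (hf hw)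
  have hinj : Function.Injective ((toEnd K L M e * toEnd K L M f).restrict hef) :=
    (injective_iff_map_eq_zero _).2 fun w hw => Subtype.ext <|
      eq_zero_of_lie_e_lie_f_eq_zero t hk w.2 (congrArg Subtype.val hw)
  obtain ⟨w, hw⟩ := LinearMap.injective_iff_surjective.1 hinj ⟨v, hv⟩
  exact ⟨⁅f, w.1⁆, hf w.2, congrArg Subtype.val hw⟩

lemma map_toEnd_e_weightPiece (t : IsSl2Triple h e f) (hk : -2 < k) :
    (weightPiece K M h k).map (toEnd K L M e) = weightPiece K M h (k + 2) := by
  refine le_antisymm ?_ fun v hv => ?_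
  · rintro _ ⟨v, hv, rfl⟩
    simpa [add_comm] using lie_mem_weightPiece (e_mem_weightPiece_two t) hv
  · obtain ⟨w, hw, rfl⟩ := exists_lie_e_eq t (by omega) hv
    exact ⟨w, by simpa using hw, rfl⟩

lemma finrank_weightPiece_eq_add (t : IsSl2Triple h e f) (hk : -2 < k) :
    finrank K (weightPiece K M h k) = finrank K (weightPiece K M h (k + 2)) +
      finrank K ↥(LinearMap.ker (toEnd K L M e) ⊓ weightPiece K M h k) := by
  rw [← map_toEnd_e_weightPiece t hk]
  have := LinearMap.finrank_range_add_finrank_ker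
    ((toEnd K L M e).domRestrict (weightPiece K M h k))
  rw [LinearMap.range_domRestrict, LinearMap.ker_domRestrict] at this
  rw [← this, inf_comm, ← Submodule.map_comap_subtype,
    Submodule.finrank_map_subtype_eq]

end WeightPiece

section WeightDimensions

open LieModule

variable {K L M : Type*} [Field K] [CharZero K] [LieRing L] [LieAlgebra K L]
  [AddCommGroup M] [Module K M] [LieRingModule L M] [LieModule K L M] [FiniteDimensional K M]
  {h e f : L} {k : ℤ}

variable (K M) in
lemma sum_finrank_ker_inf_weightPiece (t : IsSl2Triple h e f) (n : ℕ) :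
    ∑ k ∈ Finset.range n, finrank K ↥(LinearMap.ker (toEnd K L M e) ⊓ weightPiece K M h k) +
      finrank K (weightPiece K M h n) + finrank K (weightPiece K M h (n + 1)) =
    finrank K (weightPiece K M h 0) + finrank K (weightPiece K M h 1) := by
  induction n with
  | zero => simp
  | succ n ih =>
    have hn := finrank_weightPiece_eq_add (K := K) (M := M) t (k := n) (by omega)
    have h1 : weightPiece K M h (n + 1 : ℕ) = weightPiece K M h (n + 1) := by push_cast; rfl
    have h2 : weightPiece K M h ((n + 1 : ℕ) + 1) = weightPiece K M h (n + 2) := by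
      push_cast
      ring_nf
    rw [← ih, Finset.sum_range_succ, hn, h1, h2]
    ring

variable (K M) in
/-- Every irreducible summand of `M` has exactly one weight in `{0, 1}`. -/
lemma finrank_ker_toEnd_e (t : IsSl2Triple h e f) :
    finrank K ↥(LinearMap.ker (toEnd K L M e)) =
      finrank K (weightPiece K M h 0) + finrank K (weightPiece K M h 1) := by
  let N := LinearMap.ker (toEnd K L M e)
  obtain ⟨n, hn⟩ := exists_weightPiece_eq_bot K M h
  have hinv : ∀ v ∈ N, ⁅h, v⁆ ∈ N := fun v hv => by
    have hev : ⁅e, v⁆ = 0 := hv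
    have := lie_h_lie_e K t v
    rw [hev, lie_zero, smul_zero, add_zero] at this
    exact this.symm
  have hbot : ∀ k ∉ (Finset.range (n + 1)).map Nat.castEmbedding,
      N ⊓ weightPiece K M h k = ⊥ := fun k hk => by
    obtain hneg | hpos := lt_or_ge k 0
    · exact eq_bot_iff.2 fun v hv => eq_zero_of_lie_e_eq_zero t hneg hv.2 hv.1
    · rw [hn k ?_, inf_bot_eq]
      by_contra hle
      refine hk (Finset.mem_map.2 ⟨k.toNat, ?_, by simpa using hpos⟩)
      rw [abs_of_nonneg hpos] at hle
      simp only [Finset.mem_range]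
      omega
  change finrank K N = _
  rw [← iSup_weightPiece_inf_eq t hinv,
    finrank_iSup_eq_sum ((iSupIndep_weightPiece K M h).mono fun _ => inf_le_right) hbot,
    ← sum_finrank_ker_inf_weightPiece K M t (n + 1),
    hn ((n + 1 : ℕ) : ℤ) (by push_cast; rw [abs_of_nonneg] <;> omega),
    hn ((n + 1 : ℕ) + 1 : ℤ) (by push_cast; rw [abs_of_nonneg] <;> omega),
    Finset.sum_map, finrank_bot, add_zero, add_zero]
  rfl

lemma weightPiece_add_two_mul_eq_bot (t : IsSl2Triple h e f) (hk : -2 < k)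
    (hbot : weightPiece K M h k = ⊥) (n : ℕ) : weightPiece K M h (k + 2 * n) = ⊥ := by
  induction n with
  | zero => simpa
  | succ n ih =>
    have := map_toEnd_e_weightPiece (K := K) (M := M) t (k := k + 2 * n) (by omega)
    rw [ih, Submodule.map_bot] at this
    rw [this]
    push_cast
    ring_nf

lemma weightPiece_eq_bot_of_le (t : IsSl2Triple h e f) {j : ℤ} (hj : -2 < j)
    (h0 : weightPiece K M h j = ⊥) (h1 : weightPiece K M h (j + 1) = ⊥) (hjk : j ≤ k) :
    weightPiece K M h k = ⊥ := by
  obtain ⟨n, hn⟩ := Int.le.dest hjk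
  obtain ⟨m, rfl | rfl⟩ := n.even_or_odd'
  · have := weightPiece_add_two_mul_eq_bot t hj h0 m
    rwa [← hn, Nat.cast_mul, Nat.cast_ofNat]
  · have := weightPiece_add_two_mul_eq_bot t (by omega) h1 m
    rwa [← hn, show j + ((2 * m + 1 : ℕ) : ℤ) = j + 1 + 2 * m by push_cast; ring]

end WeightDimensions

section Killing

open LieModule LieAlgebra

variable {K L : Type*} [Field K] [CharZero K] [LieRing L] [LieAlgebra K L] {h e f x y : L} {j k : ℤ}

lemma killingForm_eq_zero_of_mem_weightPiece (hx : x ∈ weightPiece K L h j)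
    (hy : y ∈ weightPiece K L h k) (hjk : j + k ≠ 0) : killingForm K L x y = 0 := by
  rw [mem_weightPiece] at hx hy
  have hinv := traceForm_apply_lie_apply K L L x h y
  rw [hy, ← lie_skew, hx, map_neg, map_smul, map_smul, LinearMap.neg_apply, LinearMap.smul_apply,
    smul_eq_mul, smul_eq_mul] at hinv
  have hmul : ((j + k : ℤ) : K) * killingForm K L x y = 0 := by
    push_cast
    linear_combination -hinv
  exact (mul_eq_zero.1 hmul).resolve_left (Int.cast_ne_zero.2 hjk)

variable [FiniteDimensional K L] [IsKilling K L]

lemma eq_zero_of_killingForm_weightPiece_eq_zero (t : IsSl2Triple h e f)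
    (hx : x ∈ weightPiece K L h k) (h0 : ∀ y ∈ weightPiece K L h (-k), killingForm K L x y = 0) :
    x = 0 := by
  have hker : ⨆ j, weightPiece K L h j ≤ LinearMap.ker (killingForm K L x) := by
    refine iSup_le fun j y hy => ?_
    obtain rfl | hj := eq_or_ne j (-k)
    · exact h0 y hy
    · exact killingForm_eq_zero_of_mem_weightPiece hx hy (by omega)
  rw [iSup_weightPiece t, top_le_iff, LinearMap.ker_eq_top] at hker
  simpa [IsKilling.ker_killingForm_eq_bot] using (LinearMap.mem_ker (f := killingForm K L)).2 hker

variable (K) in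
lemma finrank_weightPiece_le_neg (t : IsSl2Triple h e f) (k : ℤ) :
    finrank K (weightPiece K L h k) ≤ finrank K (weightPiece K L h (-k)) := by
  let B : weightPiece K L h k →ₗ[K] Dual K (weightPiece K L h (-k)) :=
    (killingForm K L).domRestrict₁₂ _ _
  have hB : Function.Injective B := (injective_iff_map_eq_zero B).2 fun x hx =>
    Subtype.ext <| eq_zero_of_killingForm_weightPiece_eq_zero t x.2 fun y hy =>
      LinearMap.congr_fun hx ⟨y, hy⟩
  simpa using LinearMap.finrank_le_finrank_of_injective hB

variable (K L) in
lemma even_finrank_weightPiece (t : IsSl2Triple h e f) :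
    Function.Even fun k => finrank K (weightPiece K L h k) := fun k =>
  le_antisymm ((finrank_weightPiece_le_neg K t (-k)).trans_eq (by rw [neg_neg]))
    (finrank_weightPiece_le_neg K t k)

lemma finrank_weightPiece_one_ne_one (t : IsSl2Triple h e f) :
    finrank K (weightPiece K L h 1) ≠ 1 := fun h1 => by
  obtain ⟨x, hx, hspan⟩ := finrank_eq_one_iff'.1 h1
  refine hx (Subtype.ext (eq_zero_of_lie_f_eq_zero t one_pos x.2 ?_))
  have hfx : ⁅f, x.1⁆ ∈ weightPiece K L h (-1) := by
    simpa using lie_mem_weightPiece (f_mem_weightPiece_neg_two t) x.2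
  refine eq_zero_of_killingForm_weightPiece_eq_zero t hfx fun y hy => ?_
  obtain ⟨c, hc⟩ := hspan ⟨y, by simpa using hy⟩
  rw [← show c • x.1 = y from congrArg Subtype.val hc, map_smul, killingForm,
    traceForm_apply_lie_apply, lie_self, map_zero, smul_zero]

variable (K L) in
lemma exists_finrank_add_finrank_weightPiece_zero_eq (t : IsSl2Triple h e f) (n : ℕ) :
    ∃ m, n ≤ m ∧ finrank K L + finrank K (weightPiece K L h 0) =
      2 * ∑ k ∈ Finset.range (m + 1), finrank K (weightPiece K L h k) := by
  obtain ⟨b, hb⟩ := exists_weightPiece_eq_bot K L h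
  refine ⟨n + b, by omega, ?_⟩
  have hbot : ∀ k ∉ Finset.Icc (-((n + b : ℕ) : ℤ)) (n + b : ℕ), weightPiece K L h k = ⊥ :=
    fun k hk => hb k <| by
      rw [Finset.mem_Icc, ← abs_le] at hk
      omega
  have hdim := finrank_iSup_eq_sum (iSupIndep_weightPiece K L h) hbot
  rw [iSup_weightPiece t, finrank_top] at hdim
  have heven : Function.Even fun k => (finrank K (weightPiece K L h k) : ℤ) := fun k =>
    congrArg Nat.cast (even_finrank_weightPiece K L t k)
  have hsum := Finset.sum_Icc_of_even_eq_range heven (n + b)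
  rw [← Nat.cast_sum, ← hdim] at hsum
  zify
  rw [hsum, nsmul_eq_mul]
  push_cast
  ring

end Killing

section Distinguished

open LieAlgebra

variable {L : Type*} [LieRing L] [LieAlgebra ℂ L]

lemma lie_apply_of_apply_eq_smul [FiniteDimensional ℂ L] {x : L} {S : End ℂ L}
    (hS : ∀ a, ∀ y ∈ (ad ℂ L x).maxGenEigenspace a, S y = a • y) (y z : L) :
    S ⁅y, z⁆ = ⁅S y, z⁆ + ⁅y, S z⁆ := by
  have htop (y : L) : y ∈ ⨆ a, (ad ℂ L x).maxGenEigenspace a := by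
    simp [End.iSup_maxGenEigenspace_eq_top]
  induction htop y using Submodule.iSup_induction' with
  | mem a y hy =>
    induction htop z using Submodule.iSup_induction' with
    | mem b z hz =>
      have hyz : ⁅y, z⁆ ∈ (ad ℂ L x).maxGenEigenspace (a + b) :=
        LieModule.lie_mem_maxGenEigenspace_toEnd hy hz
      rw [hS a y hy, hS b z hz, hS _ _ hyz, smul_lie, lie_smul, ← add_smul]
    | zero => simp
    | add _ _ _ _ hz₁ hz₂ => simp only [lie_add, map_add, hz₁, hz₂]; abel
  | zero => simp
  | add _ _ _ _ hy₁ hy₂ => simp only [add_lie, map_add, hy₁, hy₂]; abel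

variable [FiniteDimensional ℂ L] [IsKilling ℂ L] {e h f x y : L}

/-- The semisimple part of `ad x` acts by scalars on the generalized eigenspaces of `ad x`, so it is
a derivation, and derivations of `L` are inner. -/
lemma exists_isSemisimple_ad_isNilpotent_sub (x : L) :
    ∃ s : L, (ad ℂ L s).IsSemisimple ∧ IsNilpotent (ad ℂ L x - ad ℂ L s) ∧
      ∀ y : L, ⁅x, y⁆ = 0 → ⁅s, y⁆ = 0 := by
  obtain ⟨N, -, S, hS_adjoin, hN, hS, hNS⟩ := (ad ℂ L x).exists_isNilpotent_isSemisimple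
  rw [eq_sub_of_add_eq hNS.symm] at hN
  have hS_smul (a : ℂ) (y : L) (hy : y ∈ (ad ℂ L x).maxGenEigenspace a) : S y = a • y :=
    End.apply_eq_of_mem_of_comm_of_isFinitelySemisimple_of_isNil hy
      (Algebra.commute_of_mem_adjoin_self hS_adjoin) hS.isFinitelySemisimple hN
  let D : LieDerivation ℂ L L :=
    ⟨S, fun y z => by
      rw [lie_apply_of_apply_eq_smul hS_smul, ← lie_skew z, sub_neg_eq_add, add_comm]⟩
  obtain ⟨s, hs⟩ := LieDerivation.IsKilling.exists_eq_ad D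
  have hsS : ad ℂ L s = S := by rw [← LieDerivation.coe_ad_apply_eq_ad_apply, hs]
  refine ⟨s, hsS ▸ hS, hsS ▸ hN, fun y hy => ?_⟩
  have hy0 : y ∈ (ad ℂ L x).maxGenEigenspace 0 :=
    (End.mem_maxGenEigenspace _ _ _).2 ⟨1, by simpa⟩
  rw [← ad_apply (R := ℂ), hsS, hS_smul 0 y hy0, zero_smul]

lemma isNilpotent_ad_of_isDistinguished (he : IsDistinguished L e) (hx : ⁅x, e⁆ = 0) :
    IsNilpotent (ad ℂ L x) := by
  obtain ⟨s, hs, hN, hsx⟩ := exists_isSemisimple_ad_isNilpotent_sub x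
  rwa [he s (hsx e hx) hs, map_zero, sub_zero] at hN

lemma killingForm_eq_zero_of_isDistinguished (he : IsDistinguished L e)
    (hx : ⁅x, e⁆ = 0) (hy : ⁅y, e⁆ = 0) : killingForm ℂ L x y = 0 := by
  have hself (z : L) (hz : ⁅z, e⁆ = 0) : killingForm ℂ L z z = 0 := by
    have hnil := isNilpotent_ad_of_isDistinguished he hz
    rw [killingForm_apply_apply, ← End.mul_eq_comp]
    exact (LinearMap.isNilpotent_trace_of_isNilpotent
      ((Commute.refl _).isNilpotent_mul_right hnil)).eq_zero
  have hxy := hself (x + y) (by rw [add_lie, hx, hy, add_zero])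
  simp only [map_add, LinearMap.add_apply, hself x hx, hself y hy,
    LieModule.traceForm_comm ℂ L L y x] at hxy
  linear_combination hxy / 2

/-- An element of `𝔤^e` of weight zero also commutes with `f`, so by invariance it is orthogonal
to the image of `ad f` as well as to `𝔤^e`, and these two span `𝔤`. -/
lemma ker_ad_e_inf_weightPiece_zero (t : IsSl2Triple h e f) (he : IsDistinguished L e) :
    LinearMap.ker (ad ℂ L e) ⊓ weightPiece ℂ L h 0 = ⊥ := by
  rw [eq_bot_iff]
  rintro x ⟨hex, hx⟩
  replace hex : ⁅e, x⁆ = 0 := hex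
  have hfx : ⁅f, x⁆ = 0 := by
    have hfx_mem : ⁅f, x⁆ ∈ weightPiece ℂ L h (-2) := by
      simpa using lie_mem_weightPiece (f_mem_weightPiece_neg_two t) hx
    refine eq_zero_of_lie_e_eq_zero t (by norm_num) hfx_mem ?_
    have hhx : ⁅h, x⁆ = 0 := by simpa using mem_weightPiece.1 hx
    rw [lie_e_lie_f t, hex, hhx, lie_zero, add_zero]
  have hker : LinearMap.ker (ad ℂ L e) ≤ LinearMap.ker (killingForm ℂ L x) := fun y hy =>
    killingForm_eq_zero_of_isDistinguished he (by rw [← lie_skew, hex, neg_zero])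
      (by rw [← lie_skew, show ⁅e, y⁆ = 0 from hy, neg_zero])
  have hrange : LinearMap.range (ad ℂ L f) ≤ LinearMap.ker (killingForm ℂ L x) := by
    rintro _ ⟨y, rfl⟩
    rw [LinearMap.mem_ker, ad_apply, killingForm, ← LieModule.traceForm_apply_lie_apply,
      ← lie_skew, hfx, neg_zero, map_zero, LinearMap.zero_apply]
  have htop := (isCompl_ker_toEnd_f_range_toEnd_e ℂ L t.symm).sup_eq_top
  have hx0 := LinearMap.ker_eq_top.1 (top_le_iff.1 (htop.ge.trans (sup_le hker hrange)))
  simpa [IsKilling.ker_killingForm_eq_bot] using (LinearMap.mem_ker (f := killingForm ℂ L)).2 hx0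

lemma finrank_weightPiece_two_of_isDistinguished (t : IsSl2Triple h e f)
    (he : IsDistinguished L e) :
    finrank ℂ (weightPiece ℂ L h 2) = finrank ℂ (weightPiece ℂ L h 0) := by
  have hker : LinearMap.ker (LieModule.toEnd ℂ L L e) ⊓ weightPiece ℂ L h 0 = ⊥ :=
    ker_ad_e_inf_weightPiece_zero t he
  rw [finrank_weightPiece_eq_add t (k := 0) (by norm_num), hker, finrank_bot, zero_add, add_zero]

lemma finrank_weightPiece_zero_eq_two_or_four (t : IsSl2Triple h e f) (he : IsDistinguished L e)
    (hdim : finrank ℂ L = 14) :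
    finrank ℂ (weightPiece ℂ L h 0) = 2 ∨ finrank ℂ (weightPiece ℂ L h 0) = 4 := by
  obtain ⟨m, hm, hsum⟩ := exists_finrank_add_finrank_weightPiece_zero_eq ℂ L t 2
  have hpos : finrank ℂ (weightPiece ℂ L h 0) ≠ 0 := fun h0 =>
    t.h_ne_zero <| (Submodule.mem_bot ℂ).1 <|
      Submodule.finrank_eq_zero.1 h0 ▸ self_mem_weightPiece_zero
  have hle : finrank ℂ (weightPiece ℂ L h 0) + finrank ℂ (weightPiece ℂ L h 2) ≤
      ∑ k ∈ Finset.range (m + 1), finrank ℂ (weightPiece ℂ L h k) :=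
    calc _ = ∑ k ∈ {0, 2}, finrank ℂ (weightPiece ℂ L h (k : ℕ)) :=
          (Finset.sum_pair (by norm_num)).symm
      _ ≤ _ := Finset.sum_le_sum_of_subset fun k hk => by
          simp only [Finset.mem_insert, Finset.mem_singleton, Finset.mem_range] at hk ⊢
          omega
  rw [finrank_weightPiece_two_of_isDistinguished t he] at hle
  omega

lemma sum_finrank_weightPiece_eq_nine (t : IsSl2Triple h e f) (hdim : finrank ℂ L = 14)
    (hzero : finrank ℂ (weightPiece ℂ L h 0) = 4) : ∃ m, 7 ≤ m ∧
    ∑ k ∈ Finset.range m, finrank ℂ (weightPiece ℂ L h k) = 9 := by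
  obtain ⟨m, hm, hsum⟩ := exists_finrank_add_finrank_weightPiece_zero_eq ℂ L t 6
  exact ⟨m + 1, by omega, by omega⟩

lemma weightPiece_one_eq_bot (t : IsSl2Triple h e f) (he : IsDistinguished L e)
    (hdim : finrank ℂ L = 14) (hzero : finrank ℂ (weightPiece ℂ L h 0) = 4) :
    weightPiece ℂ L h 1 = ⊥ := by
  obtain ⟨m, hm, hsum⟩ := sum_finrank_weightPiece_eq_nine t hdim hzero
  have hle : ∑ k ∈ {0, 1, 2}, finrank ℂ (weightPiece ℂ L h (k : ℕ)) ≤ 9 :=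
    hsum ▸ Finset.sum_le_sum_of_subset fun k hk => by
      simp only [Finset.mem_insert, Finset.mem_singleton, Finset.mem_range] at hk ⊢
      omega
  have h2 := finrank_weightPiece_two_of_isDistinguished t he
  have h1 := finrank_weightPiece_one_ne_one (K := ℂ) t
  rw [Finset.sum_insert (by simp), Finset.sum_pair (by simp)] at hle
  push_cast at hle
  exact Submodule.finrank_eq_zero.1 (by omega)

lemma finrank_weightPiece_four_and_six (t : IsSl2Triple h e f) (he : IsDistinguished L e)
    (hdim : finrank ℂ L = 14) (hzero : finrank ℂ (weightPiece ℂ L h 0) = 4) :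
    finrank ℂ (weightPiece ℂ L h 4) = 1 ∧ finrank ℂ (weightPiece ℂ L h 6) = 0 := by
  have h1 := weightPiece_one_eq_bot t he hdim hzero
  have h2 := finrank_weightPiece_two_of_isDistinguished t he
  obtain ⟨m, hm, hsum⟩ := sum_finrank_weightPiece_eq_nine t hdim hzero
  have h4 : finrank ℂ (weightPiece ℂ L h 4) ≠ 0 := fun h4 => by
    have hbot (k : ℕ) (hk : 3 ≤ k) : weightPiece ℂ L h k = ⊥ :=
      weightPiece_eq_bot_of_le t (j := 3) (by norm_num)
        (weightPiece_add_two_mul_eq_bot t (by norm_num) h1 1) (Submodule.finrank_eq_zero.1 h4)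
        (by omega)
    have hsum' : ∑ k ∈ Finset.range 3, finrank ℂ (weightPiece ℂ L h k) =
        ∑ k ∈ Finset.range m, finrank ℂ (weightPiece ℂ L h k) :=
      Finset.sum_subset (Finset.range_subset_range.2 (by omega)) fun k _ hk => by
        rw [hbot k (by simpa using hk), finrank_bot]
    rw [hsum, Finset.sum_range_succ, Finset.sum_range_succ, Finset.sum_range_one] at hsum'
    push_cast at hsum'
    have hd1 := Submodule.finrank_eq_zero.2 h1
    omega
  have hle : ∑ k ∈ {0, 2, 4, 6}, finrank ℂ (weightPiece ℂ L h (k : ℕ)) ≤ 9 :=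
    hsum ▸ Finset.sum_le_sum_of_subset fun k hk => by
      simp only [Finset.mem_insert, Finset.mem_singleton, Finset.mem_range] at hk ⊢
      omega
  rw [Finset.sum_insert (by simp), Finset.sum_insert (by simp), Finset.sum_pair (by simp)] at hle
  push_cast at hle
  omega

lemma weightPiece_eq_bot_of_four_lt (t : IsSl2Triple h e f) (he : IsDistinguished L e)
    (hdim : finrank ℂ L = 14) (hzero : finrank ℂ (weightPiece ℂ L h 0) = 4) {k : ℤ} (hk : 4 < k) :
    weightPiece ℂ L h k = ⊥ :=
  weightPiece_eq_bot_of_le t (j := 5) (by norm_num)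
    (weightPiece_add_two_mul_eq_bot t (by norm_num) (weightPiece_one_eq_bot t he hdim hzero) 2)
    (Submodule.finrank_eq_zero.1 (finrank_weightPiece_four_and_six t he hdim hzero).2) hk

end Distinguished

section SerreGenerators

open LieAlgebra CartanMatrix Matrix

variable {K L B : Type*} [Field K] [LieRing L] [LieAlgebra K L]

/-- Families `h`, `e`, `f` of elements generating `L` and satisfying Serre's relations for the
integer matrix `A`, apart from those on iterated brackets of the `e i` or of the `f i`. -/
structure IsSerreSystem (K : Type*) {L B : Type*} [CommRing K] [LieRing L] [LieAlgebra K L]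
    (A : Matrix B B ℤ) (h e f : B → L) : Prop where
  lie_h_h (i j : B) : ⁅h i, h j⁆ = 0
  lie_e_f (i : B) : ⁅e i, f i⁆ = h i
  lie_e_f_of_ne (i j : B) (hij : i ≠ j) : ⁅e i, f j⁆ = 0
  lie_h_e (i j : B) : ⁅h i, e j⁆ = A i j • e j
  lie_h_f (i j : B) : ⁅h i, f j⁆ = -A i j • f j
  lieSpan_eq_top : LieSubalgebra.lieSpan K L (Set.range e ∪ Set.range f) = ⊤

/-- The quotient map onto the Lie algebra with Serre's generators and relations, as a morphism of
Lie algebras. -/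
noncomputable def serreMk (K : Type*) {B : Type*} [CommRing K] [DecidableEq B] (A : Matrix B B ℤ) :
    FreeLieAlgebra K (Generators B) →ₗ⁅K⁆ Matrix.ToLieAlgebra K A where
  toLinearMap := (LieSubmodule.Quotient.mk' (Relations.toIdeal K A) :
    FreeLieAlgebra K (Generators B) →ₗ[K] FreeLieAlgebra K (Generators B) ⧸ Relations.toIdeal K A)
  map_lie' {x y} := LieSubmodule.Quotient.mk_bracket (Relations.toIdeal K A) x y

lemma serreMk_surjective [DecidableEq B] (A : Matrix B B ℤ) : Function.Surjective (serreMk K A) :=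
  LieSubmodule.Quotient.surjective_mk' (Relations.toIdeal K A)

lemma serreMk_eq_zero [DecidableEq B] {A : Matrix B B ℤ} {x : FreeLieAlgebra K (Generators B)}
    (hx : x ∈ Relations.toSet K A) : serreMk K A x = 0 :=
  (LieSubmodule.Quotient.mk_eq_zero (Relations.toIdeal K A)).2 (LieSubmodule.subset_lieSpan hx)

lemma lieSpan_range_e_union_range_f_eq_top (π : FreeLieAlgebra K (Generators B) →ₗ⁅K⁆ L)
    (hπ : Function.Surjective π)
    (hef : ∀ i, ⁅π (.of K (.E i)), π (.of K (.F i))⁆ = π (.of K (.H i))) :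
    LieSubalgebra.lieSpan K L ((Set.range fun i => π (.of K (.E i))) ∪
      Set.range fun i => π (.of K (.F i))) = ⊤ := by
  set S := LieSubalgebra.lieSpan K L ((Set.range fun i => π (.of K (.E i))) ∪
    Set.range fun i => π (.of K (.F i)))
  have he (i : B) : π (.of K (.E i)) ∈ S := LieSubalgebra.subset_lieSpan (.inl ⟨i, rfl⟩)
  have hf (i : B) : π (.of K (.F i)) ∈ S := LieSubalgebra.subset_lieSpan (.inr ⟨i, rfl⟩)
  have hgen : ∀ x, π (.of K x) ∈ S
    | .H i => hef i ▸ S.lie_mem (he i) (hf i)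
    | .E i => he i
    | .F i => hf i
  have hcomp : S.incl.comp (FreeLieAlgebra.lift K fun x => (⟨_, hgen x⟩ : S)) = π := by
    ext x
    simp
  refine eq_top_iff.2 fun x _ => ?_
  obtain ⟨y, rfl⟩ := hπ x
  rw [← hcomp]
  exact Subtype.prop _

lemma exists_isSerreSystem [DecidableEq B] {A : Matrix B B ℤ}
    (φ : L ≃ₗ⁅K⁆ Matrix.ToLieAlgebra K A) : ∃ h e f : B → L, IsSerreSystem K A h e f := by
  let π : FreeLieAlgebra K (Generators B) →ₗ⁅K⁆ L := φ.symm.toLieHom.comp (serreMk K A)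
  have hπ : Function.Surjective π := φ.symm.surjective.comp (serreMk_surjective A)
  have hπ0 {x} (hx : x ∈ Relations.toSet K A) : π x = 0 :=
    (congrArg φ.symm (serreMk_eq_zero hx)).trans (map_zero _)
  have hef (i : B) : ⁅π (.of K (.E i)), π (.of K (.F i))⁆ = π (.of K (.H i)) := by
    have := hπ0 (x := Relations.EF K (i, i)) (by simp [Relations.toSet])
    simpa [Relations.EF, sub_eq_zero] using this
  refine ⟨fun i => π (.of K (.H i)), fun i => π (.of K (.E i)), fun i => π (.of K (.F i)),
    fun i j => ?_, hef, fun i j hij => ?_, fun i j => ?_, fun i j => ?_,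
    lieSpan_range_e_union_range_f_eq_top π hπ hef⟩
  · have := hπ0 (x := Relations.HH K (i, j)) (by simp [Relations.toSet])
    simpa [Relations.HH] using this
  · have := hπ0 (x := Relations.EF K (i, j)) (by simp [Relations.toSet])
    simpa [Relations.EF, hij] using this
  · have := hπ0 (x := Relations.HE K A (i, j)) (by simp [Relations.toSet])
    simpa [Relations.HE, sub_eq_zero] using this
  · have := hπ0 (x := Relations.HF K A (i, j)) (by simp [Relations.toSet])
    simpa [Relations.HF, add_eq_zero_iff_eq_neg] using this

namespace IsSerreSystem

variable [CharZero K] {A : Matrix B B ℤ} {h e f : B → L}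

lemma h_ne_zero [Nontrivial L] (H : IsSerreSystem K A h e f) (hA : ∀ i j, A i j ≠ 0) (i : B) :
    h i ≠ 0 := by
  intro hi
  have hzero {n : ℤ} (hn : n ≠ 0) {x : L} (hx : ⁅h i, x⁆ = n • x) : x = 0 := by
    rw [hi, zero_lie, ← Int.cast_smul_eq_zsmul K] at hx
    exact (smul_eq_zero.1 hx.symm).resolve_left (Int.cast_ne_zero.2 hn)
  have he (j : B) : e j = 0 := hzero (hA i j) (H.lie_h_e i j)
  have hf (j : B) : f j = 0 := hzero (neg_ne_zero.2 (hA i j)) (H.lie_h_f i j)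
  have hbot : LieSubalgebra.lieSpan K L (Set.range e ∪ Set.range f) ≤ ⊥ := by
    rw [LieSubalgebra.lieSpan_le]
    rintro _ (⟨j, rfl⟩ | ⟨j, rfl⟩)
    · simp [he]
    · simp [hf]
  rw [H.lieSpan_eq_top] at hbot
  obtain ⟨x, hx⟩ := exists_ne (0 : L)
  exact hx (by simpa using hbot (LieSubalgebra.mem_top x))

lemma e_ne_zero [Nontrivial L] (H : IsSerreSystem K A h e f) (hA : ∀ i j, A i j ≠ 0) (i : B) :
    e i ≠ 0 := fun hi =>
  H.h_ne_zero hA i (by rw [← H.lie_e_f, hi, zero_lie])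

lemma linearIndependent_h [Nontrivial L] [Fintype B] [DecidableEq B] (H : IsSerreSystem K A h e f)
    (hA : ∀ i j, A i j ≠ 0) (hdet : A.det ≠ 0) : LinearIndependent K h := by
  rw [Fintype.linearIndependent_iff]
  intro g hg
  have hdet' : (A.map (Int.cast : ℤ → K)).det ≠ 0 := by
    rw [← Int.cast_det]
    exact Int.cast_ne_zero.2 hdet
  refine congrFun (eq_zero_of_vecMul_eq_zero hdet' (funext fun j => ?_))
  have hj : (∑ i, g i * (A i j : K)) • e j = 0 := by
    have := congrArg (⁅·, e j⁆) hg
    simpa only [sum_lie, smul_lie, H.lie_h_e,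
      zero_lie, ← Int.cast_smul_eq_zsmul K, smul_smul, ← Finset.sum_smul] using this
  exact (smul_eq_zero.1 hj).resolve_right (H.e_ne_zero hA j)

/-- The `LieAlgebra.Basis` given by a Serre system whose matrix has nonzero entries. The matrix
is transposed because `LieAlgebra.Basis` indexes `⁅h j, e i⁆ = A i j • e i`. -/
def toBasis [Nontrivial L] [Fintype B] [DecidableEq B] (H : IsSerreSystem K A h e f)
    (hA : ∀ i j, A i j ≠ 0) (hdet : A.det ≠ 0) (hdiag : ∀ i, A i i = 2) :
    LieAlgebra.Basis B (LieSubalgebra.lieSpan K L (Set.range h)) where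
  A := A.transpose
  h := h
  e := e
  f := f
  cartan_eq_lieSpan := rfl
  span_ef := H.lieSpan_eq_top
  linInd := H.linearIndependent_h hA hdet
  nondegen := Matrix.nondegenerate_of_det_ne_zero (by rwa [Matrix.det_transpose])
  sl2 i :=
    { h_ne_zero := H.h_ne_zero hA i
      lie_e_f := H.lie_e_f i
      lie_h_e_nsmul := by rw [H.lie_h_e, hdiag, ofNat_zsmul]
      lie_h_f_nsmul := by rw [H.lie_h_f, hdiag, neg_smul, ofNat_zsmul] }
  lie_h_h := H.lie_h_h
  lie_h_e i j := H.lie_h_e j i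
  lie_h_f i j := H.lie_h_f j i
  lie_e_f_ne := H.lie_e_f_of_ne

end IsSerreSystem

lemma exists_basis_of_equiv_g₂ [CharZero K] [Nontrivial L] (φ : L ≃ₗ⁅K⁆ LieAlgebra.g₂ K) :
    ∃ (H : LieSubalgebra K L) (b : LieAlgebra.Basis (Fin 2) H),
      b.A = CartanMatrix.G₂.transpose := by
  obtain ⟨h, e, f, hef⟩ := exists_isSerreSystem φ
  have hG₂ (i j : Fin 2) : CartanMatrix.G₂ i j ≠ 0 := by
    fin_cases i <;> fin_cases j <;> simp [CartanMatrix.G₂]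
  have hdiag (i : Fin 2) : CartanMatrix.G₂ i i = 2 := by
    fin_cases i <;> simp [CartanMatrix.G₂]
  refine ⟨_, hef.toBasis hG₂ (by simp [CartanMatrix.G₂_det]) hdiag, rfl⟩

end SerreGenerators

section RootSpaces

open LieAlgebra LieModule

variable {K L : Type*} [Field K] [CharZero K] [LieRing L] [LieAlgebra K L] [FiniteDimensional K L]
  [IsKilling K L] (H : LieSubalgebra K L) [H.IsCartanSubalgebra] [IsTriangularizable K H L]

omit [CharZero K] [FiniteDimensional K L] [IsKilling K L] [IsTriangularizable K H L] in
lemma iSupIndep_rootSpace : iSupIndep fun χ : Weight K H L => (rootSpace H χ).toSubmodule :=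
  LieSubmodule.iSupIndep_toSubmodule.2 (iSupIndep_genWeightSpace' K H L)

omit [CharZero K] [IsKilling K L] in
lemma iSup_rootSpace_eq_top : ⨆ χ : Weight K H L, (rootSpace H χ).toSubmodule = ⊤ :=
  LieSubmodule.iSup_toSubmodule_eq_top.2 (iSup_genWeightSpace_eq_top' K H L)

omit [CharZero K] [IsKilling K L] in
lemma finrank_eq_sum_finrank_rootSpace :
    finrank K L = ∑ χ : Weight K H L, finrank K (rootSpace H χ) := by
  rw [← finrank_top K L, ← iSup_rootSpace_eq_top H]
  exact finrank_iSup_eq_sum (iSupIndep_rootSpace H) (s := Finset.univ)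
    fun χ hχ => absurd (Finset.mem_univ χ) hχ

lemma finrank_eq_card_root_add_finrank [Nontrivial L] :
    finrank K L = H.root.card + finrank K H := by
  classical
  have huniv : (Finset.univ : Finset (Weight K H L)) = insert 0 H.root := by
    ext χ
    simp [Weight.isNonZero_iff_ne_zero, em]
  have hzero : finrank K (rootSpace H ((0 : Weight K H L) : H → K)) = finrank K H := by
    rw [FunLike.coe_zero, rootSpace_zero_eq K L H]
    rfl
  have hroot : ∀ χ ∈ H.root, finrank K (rootSpace H χ) = 1 := fun χ hχ =>
    IsKilling.finrank_rootSpace_eq_one χ (by simpa using hχ)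
  rw [finrank_eq_sum_finrank_rootSpace H, huniv, Finset.sum_insert (by simp [Weight.isZero_zero]),
    hzero, Finset.sum_congr rfl hroot, ← Finset.card_eq_sum_ones, add_comm]

end RootSpaces

section TypeG2

open LieAlgebra LieAlgebra.IsKilling

variable {K L : Type*} [Field K] [CharZero K] [LieRing L] [LieAlgebra K L] [FiniteDimensional K L]
  [IsKilling K L] (H : LieSubalgebra K L) [H.IsCartanSubalgebra]
  [LieModule.IsTriangularizable K H L]

lemma finrank_eq_fourteen_of_isG2 [(rootSystem H).IsG2] : finrank K L = 14 := by
  let := RootPairing.IsG2.toEmbeddedG2 (rootSystem H)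
  have hcard : H.root.card = 12 := by
    rw [← RootPairing.EmbeddedG2.card_index_eq_twelve (rootSystem H), Nat.card_eq_fintype_card,
      Fintype.card_coe]
  have hrank : finrank K H = 2 := by
    rw [← Subspace.dual_finrank_eq,
      finrank_eq_card_basis (RootPairing.EmbeddedG2.basis (rootSystem H)), Fintype.card_fin]
  have : Nontrivial H := nontrivial_of_finrank_pos (R := K) (hrank ▸ two_pos)
  have : Nontrivial L := H.toSubmodule.subtype_injective.nontrivial
  rw [finrank_eq_card_root_add_finrank H, hcard, hrank]

end TypeG2

section Rank

open LieAlgebra LieAlgebra.IsKilling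

lemma natCard_le_two_of_finrank_le_one {ι R M N : Type*} [Finite ι] [Field R] [AddCommGroup M]
    [Module R M] [AddCommGroup N] [Module R N] (P : RootPairing ι R M N) [P.IsReduced]
    [Module.Finite R M] (hM : finrank R M ≤ 1) : Nat.card ι ≤ 2 := by
  obtain hι | ⟨⟨i⟩⟩ := isEmpty_or_nonempty ι
  · simp
  have huniv : (Set.univ : Set ι) ⊆ {i, P.reflectionPerm i i} := by
    rintro j -
    have hdep : ¬ LinearIndependent R ![P.root j, P.root i] := fun h => by
      have := h.fintype_card_le_finrank
      rw [Fintype.card_fin] at this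
      omega
    refine (RootPairing.IsReduced.eq_or_eq_neg j i hdep).imp (fun h => P.root.injective h)
      fun h => P.root.injective ?_
    rw [h, P.root_reflectionPerm, P.reflection_apply_self]
  rw [← Set.ncard_univ]
  exact (Set.ncard_le_ncard huniv).trans (Set.ncard_insert_le i _ |>.trans (by simp))

section Engel

variable {K L : Type*} [Field K] [Infinite K] [LieRing L] [LieAlgebra K L] [FiniteDimensional K L]

lemma isCartanSubalgebra_engel_of_isRegular {x : L} (hx : IsRegular K x) :
    (LieSubalgebra.engel K x).IsCartanSubalgebra := by
  have hcard : (finrank K L : Cardinal) ≤ Cardinal.mk K :=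
    Cardinal.natCast_le_aleph0.trans (Cardinal.infinite_iff.1 inferInstance)
  refine ⟨?_, LieSubalgebra.normalizer_engel K x⟩
  refine LieSubalgebra.isNilpotent_of_forall_le_engel _ fun y hy => ?_
  let E : {LieSubalgebra.engel K z | z ∈ LieSubalgebra.engel K x} :=
    ⟨LieSubalgebra.engel K x, x, LieSubalgebra.self_mem_engel K x, rfl⟩
  suffices hE : IsMin E from
    LieAlgebra.engel_isBot_of_isMin hcard _ E le_rfl hE ⟨LieSubalgebra.engel K y, y, hy, rfl⟩
  rintro ⟨_, y, -, rfl⟩ (hyx : LieSubalgebra.engel K y ≤ LieSubalgebra.engel K x)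
  have hle : finrank K (LieSubalgebra.engel K x) ≤ finrank K (LieSubalgebra.engel K y) :=
    ((LieAlgebra.isRegular_iff_finrank_engel_eq_rank K x).1 hx).trans_le
      (LieAlgebra.rank_le_finrank_engel K y)
  exact (LieSubalgebra.toSubmodule_injective (Submodule.eq_of_le_of_finrank_le hyx hle)).ge

end Engel

lemma two_le_rank {K L : Type*} [Field K] [CharZero K] [IsAlgClosed K] [LieRing L] [LieAlgebra K L]
    [FiniteDimensional K L] [IsKilling K L] (hL : 3 < finrank K L) : 2 ≤ rank K L := by
  have : Nontrivial L := nontrivial_of_finrank_pos (R := K) (by omega)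
  obtain ⟨x, hx⟩ := exists_isRegular K L
  have := isCartanSubalgebra_engel_of_isRegular hx
  have hdim := finrank_eq_card_root_add_finrank (LieSubalgebra.engel K x)
  rw [isRegular_iff_finrank_engel_eq_rank] at hx
  by_contra! hrank
  have hroot := natCard_le_two_of_finrank_le_one (rootSystem (LieSubalgebra.engel K x))
    (by rw [Subspace.dual_finrank_eq]; omega)
  rw [Nat.card_eq_fintype_card, Fintype.card_coe] at hroot
  omega

end Rank

lemma finrank_eq_fourteen_of_equiv_g₂ {K L : Type*} [Field K] [CharZero K] [IsAlgClosed K]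
    [LieRing L] [LieAlgebra K L] [FiniteDimensional K L] [LieAlgebra.IsSimple K L]
    (φ : L ≃ₗ⁅K⁆ LieAlgebra.g₂ K) : finrank K L = 14 := by
  have : Nontrivial L := by
    by_contra hL
    rw [not_nontrivial_iff_subsingleton] at hL
    exact LieAlgebra.IsSimple.non_abelian K (L := L) ⟨fun x y => Subsingleton.elim _ _⟩
  obtain ⟨H, b, hb⟩ := exists_basis_of_equiv_g₂ φ
  have := b.isCartanSubalgebra
  have hG₂ : (LieAlgebra.IsKilling.rootSystem H).IsG2 := by
    rw [RootPairing.isG2_iff]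
    refine ⟨b.baseSupportEquiv 1, b.baseSupportEquiv 0, ?_⟩
    have hA := congrFun₂ b.cartanMatrix_base_eq (b.baseSupportEquiv 1) (b.baseSupportEquiv 0)
    exact hA.trans (by simp [hb, CartanMatrix.G₂])
  exact finrank_eq_fourteen_of_isG2 H

section RankTwoHeights

variable {ι R M N : Type*} [Finite ι] [Field R] [CharZero R] [AddCommGroup M] [Module R M]
  [AddCommGroup N] [Module R N] {P : RootPairing ι R M N}

lemma exists_base_pair [P.IsRootSystem] [P.IsCrystallographic] (hM : finrank R M = 2) {f : M →+ ℚ}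
    (hf : ∀ i, f (P.root i) ≠ 0) :
    ∃ a b : ι, 0 < f (P.root a) ∧ 0 < f (P.root b) ∧ ∀ i, ∃ m n : ℕ,
      m • P.root a + n • P.root b = P.root i ∨ m • P.root a + n • P.root b = -P.root i := by
  let := P.indexNeg
  set s := IsAddIndecomposable.baseOf P.root f
  have hclosure (i : ι) : P.root i ∈ AddSubmonoid.closure (P.root '' s) ∨
      -P.root i ∈ AddSubmonoid.closure (P.root '' s) :=
    IsAddIndecomposable.mem_or_neg_mem_closure_baseOf P.root f i (hf i) (by simp)
  have hcard : s.ncard = 2 :=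
    (P.ncard_eq_finrank_of_linearIndepOn_of (P.linearIndepOn_root_baseOf f hf) hclosure).trans hM
  obtain ⟨a, b, -, hab⟩ := Set.ncard_eq_two.1 hcard
  have hpos : ∀ i ∈ s, 0 < f (P.root i) := fun i hi =>
    IsAddIndecomposable.baseOf_subset_pos P.root f hi
  rw [hab] at hclosure hpos
  refine ⟨a, b, hpos a (by simp), hpos b (by simp), fun i => ?_⟩
  simp only [Set.image_pair, AddSubmonoid.mem_closure_pair] at hclosure
  obtain ⟨m, n, h⟩ | ⟨m, n, h⟩ := hclosure i
  exacts [⟨m, n, .inl h⟩, ⟨m, n, .inr h⟩]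

omit [Finite ι] in
lemma eq_or_eq_or_root_eq_add [P.IsReduced] {f : M →+ ℚ} {a b i : ι} {m n : ℕ}
    (ha : 1 ≤ f (P.root a)) (hb : 1 ≤ f (P.root b)) (hi : f (P.root i) = 2)
    (h : m • P.root a + n • P.root b = P.root i) :
    i = a ∨ i = b ∨ P.root i = P.root a + P.root b := by
  have hsum : m * f (P.root a) + n * f (P.root b) = 2 := by
    simpa [hi] using congrArg f h
  have hmn : (m : ℚ) + n ≤ 2 := by
    nlinarith [mul_le_mul_of_nonneg_left ha (Nat.cast_nonneg' (α := ℚ) m),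
      mul_le_mul_of_nonneg_left hb (Nat.cast_nonneg' (α := ℚ) n)]
  have hmn' : m + n ≤ 2 := by exact_mod_cast hmn
  have : IsAddTorsionFree M := .of_isTorsionFree R M
  have hred (j : ι) (hj : 2 • P.root j = P.root i) : False :=
    P.nsmul_notMem_range_root ⟨i, hj.symm⟩
  obtain ⟨rfl, rfl⟩ | ⟨rfl, rfl⟩ | ⟨rfl, rfl⟩ | ⟨rfl, rfl⟩ | ⟨rfl, rfl⟩ | ⟨rfl, rfl⟩ :
      m = 0 ∧ n = 0 ∨ m = 1 ∧ n = 0 ∨ m = 2 ∧ n = 0 ∨ m = 0 ∧ n = 1 ∨ m = 0 ∧ n = 2 ∨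
        m = 1 ∧ n = 1 := by omega
  · norm_num at hsum
  · exact .inl (P.root.injective (by simpa using h.symm))
  · exact (hred a (by simpa using h)).elim
  · exact .inr (.inl (P.root.injective (by simpa using h.symm)))
  · exact (hred b (by simpa using h)).elim
  · exact .inr (.inr (by simpa using h.symm))

omit [Finite ι] [CharZero R] in
lemma apply_root_eq_two_of_two_roots {f : M →+ ℚ} {a b i j : ι} (ha : 0 < f (P.root a))
    (hb : 0 < f (P.root b)) (hij : i ≠ j) (hi : f (P.root i) = 2) (hj : f (P.root j) = 2)
    (hi' : i = a ∨ i = b ∨ P.root i = P.root a + P.root b)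
    (hj' : j = a ∨ j = b ∨ P.root j = P.root a + P.root b) :
    f (P.root a) = 2 ∧ f (P.root b) = 2 := by
  have hadd {l : ι} (hl : f (P.root l) = 2) (h : P.root l = P.root a + P.root b) :
      f (P.root a) + f (P.root b) = 2 := by
    rw [← map_add, ← h, hl]
  obtain rfl | rfl | hi' := hi' <;> obtain rfl | rfl | hj' := hj'
  · exact absurd rfl hij
  · exact ⟨hi, hj⟩
  · linarith [hadd hj hj']
  · exact ⟨hj, hi⟩
  · exact absurd rfl hij
  · linarith [hadd hj hj']
  · linarith [hadd hi hi']
  · linarith [hadd hi hi']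
  · exact absurd (P.root.injective (hi'.trans hj'.symm)) hij

lemma apply_root_ne_one_of_two_roots_apply_eq_two [P.IsRootSystem] [P.IsCrystallographic]
    [P.IsReduced] (hM : finrank R M = 2) {f : M →+ ℚ} (hf : ∀ i, f (P.root i) ≠ 0)
    (hint : ∀ i, ∃ n : ℤ, f (P.root i) = n) {i j : ι} (hij : i ≠ j) (hi : f (P.root i) = 2)
    (hj : f (P.root j) = 2) (k : ι) : f (P.root k) ≠ 1 := by
  obtain ⟨a, b, ha, hb, hbase⟩ := exists_base_pair hM hf
  have hone {l : ι} (hl : 0 < f (P.root l)) : 1 ≤ f (P.root l) := by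
    obtain ⟨n, hn⟩ := hint l
    rw [hn] at hl ⊢
    exact_mod_cast hl
  have hheight {l : ι} (hl : f (P.root l) = 2) :
      l = a ∨ l = b ∨ P.root l = P.root a + P.root b := by
    obtain ⟨m, n, h | h⟩ := hbase l
    · exact eq_or_eq_or_root_eq_add (hone ha) (hone hb) hl h
    · have hneg : m * f (P.root a) + n * f (P.root b) = -2 := by
        simpa [hl] using congrArg f h
      have : 0 ≤ m * f (P.root a) + n * f (P.root b) := by positivity
      linarith
  obtain ⟨ha2, hb2⟩ :=
    apply_root_eq_two_of_two_roots ha hb hij hi hj (hheight hi) (hheight hj)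
  intro hk
  obtain ⟨m, n, h⟩ := hbase k
  have hodd : ((m * 2 + n * 2 : ℤ) : ℚ) = (1 : ℤ) ∨ ((m * 2 + n * 2 : ℤ) : ℚ) = (-1 : ℤ) := by
    refine h.imp (fun h => ?_) fun h => ?_ <;> simpa [ha2, hb2, hk] using congrArg f h
  simp only [Int.cast_inj] at hodd
  omega

end RankTwoHeights

section RootHeights

open LieAlgebra LieModule

lemma eq_of_iSupIndep_of_iSup_eq_top {α ι : Type*} [CompleteLattice α] [IsModularLattice α]
    {p r : ι → α} (hp : iSupIndep p) (hle : ∀ i, r i ≤ p i) (htop : ⨆ i, r i = ⊤) (i : ι) :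
    r i = p i := by
  refine le_antisymm (hle i) ?_
  have hdisj : (⨆ (j) (_ : j ≠ i), r j) ⊓ p i = ⊥ :=
    ((hp i).symm.mono_left (iSup₂_mono fun j _ => hle j)).eq_bot
  have hsup : r i ⊔ ⨆ (j) (_ : j ≠ i), r j = ⊤ := by
    refine eq_top_iff.2 (htop ▸ iSup_le fun j => ?_)
    obtain rfl | hj := eq_or_ne j i
    · exact le_sup_left
    · exact le_sup_of_le_right (le_iSup₂_of_le j hj le_rfl)
  calc p i = (r i ⊔ ⨆ (j) (_ : j ≠ i), r j) ⊓ p i := by rw [hsup, top_inf_eq]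
    _ = r i ⊔ (⨆ (j) (_ : j ≠ i), r j) ⊓ p i := (sup_inf_assoc_of_le _ (hle i)).symm ▸ rfl
    _ ≤ r i := by rw [hdisj, sup_bot_eq]

lemma exists_addMonoidHom_rat_apply_intCast (K : Type*) [DivisionRing K] [CharZero K] :
    ∃ r : K →+ ℚ, ∀ n : ℤ, r n = n := by
  obtain ⟨r, hr⟩ := LinearMap.exists_leftInverse_of_injective (Algebra.linearMap ℚ K)
    (LinearMap.ker_eq_bot.2 (algebraMap ℚ K).injective)
  exact ⟨r, fun n => by simpa using LinearMap.congr_fun hr n⟩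

variable {K L : Type*} [Field K] [CharZero K] [LieRing L] [LieAlgebra K L] [FiniteDimensional K L]

lemma exists_intCast_eq_of_lie_eq_smul {h e f v : L} (t : IsSl2Triple h e f) (hv : v ≠ 0) {c : K}
    (hc : ⁅h, v⁆ = c • v) : ∃ n : ℤ, c = n := by
  have hspan := iSup_weightPiece_inf_eq t (p := K ∙ v) fun w hw => by
    obtain ⟨a, rfl⟩ := Submodule.mem_span_singleton.1 hw
    rw [lie_smul, hc]
    exact Submodule.smul_mem _ _ (Submodule.smul_mem _ _ (Submodule.mem_span_singleton_self v))
  obtain ⟨n, hn⟩ : ∃ n : ℤ, K ∙ v ⊓ weightPiece K L h n ≠ ⊥ := by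
    by_contra! hbot
    rw [iSup_congr hbot, iSup_bot, eq_comm, Submodule.span_singleton_eq_bot] at hspan
    exact hv hspan
  obtain ⟨w, ⟨hw, hwn⟩, hw0⟩ := Submodule.exists_mem_ne_zero_of_ne_bot hn
  obtain ⟨a, rfl⟩ := Submodule.mem_span_singleton.1 hw
  refine ⟨n, smul_left_injective K hw0 ?_⟩
  have := mem_weightPiece.1 hwn
  rwa [lie_smul, hc, smul_comm] at this

lemma engel_toSubmodule_eq_weightPiece_zero {h e f : L} (t : IsSl2Triple h e f) :
    (LieSubalgebra.engel K h).toSubmodule = weightPiece K L h 0 := by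
  refine le_antisymm ?_ fun v hv => ?_
  · rw [← iSup_weightPiece_inf_eq t (p := (LieSubalgebra.engel K h).toSubmodule) fun v hv =>
      LieSubalgebra.lie_mem _ (LieSubalgebra.self_mem_engel K h) hv]
    refine iSup_le fun k v ⟨hv, hvk⟩ => ?_
    obtain rfl | hk := eq_or_ne k 0
    · exact hvk
    obtain ⟨n, hn⟩ := (LieSubalgebra.mem_engel_iff K h v).1 hv
    have hpow (n : ℕ) : ((ad K L h) ^ n) v = (k : K) ^ n • v := by
      induction n with
      | zero => simp
      | succ n ih => rw [pow_succ', Module.End.mul_apply, ih, map_smul, ad_apply,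
          mem_weightPiece.1 hvk, smul_smul, pow_succ]
    rw [hpow, smul_eq_zero] at hn
    rw [hn.resolve_left (pow_ne_zero n (Int.cast_ne_zero.2 hk))]
    exact zero_mem _
  · exact (LieSubalgebra.mem_engel_iff K h v).2 ⟨1, by simpa using mem_weightPiece.1 hv⟩

variable [IsKilling K L] {H : LieSubalgebra K L} [H.IsCartanSubalgebra] [IsTriangularizable K H L]
  {h : H} {e f : L}

lemma rootSpace_le_weightPiece {χ : Weight K H L} {k : ℤ} (hχ : χ h = k) :
    (rootSpace H χ).toSubmodule ≤ weightPiece K L (h : L) k := fun _ hx =>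
  mem_weightPiece.2 (hχ ▸ IsKilling.lie_eq_smul_of_mem_rootSpace hx h)

lemma exists_intCast_eq_weight_apply (t : IsSl2Triple (h : L) e f) (χ : Weight K H L) :
    ∃ n : ℤ, χ h = n := by
  obtain ⟨x, hx, hx0⟩ := χ.exists_ne_zero
  exact exists_intCast_eq_of_lie_eq_smul t hx0 (IsKilling.lie_eq_smul_of_mem_rootSpace hx h)

open Classical in
lemma finrank_weightPiece_eq_card_root (t : IsSl2Triple (h : L) e f) {k : ℤ} (hk : k ≠ 0) :
    finrank K (weightPiece K L (h : L) k) = (H.root.filter fun α => α h = (k : K)).card := by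
  have htop : ⨆ n : ℤ, ⨆ χ ∈ Finset.univ.filter fun χ : Weight K H L => χ h = n,
      (rootSpace H χ).toSubmodule = ⊤ := by
    rw [eq_top_iff, ← iSup_rootSpace_eq_top H]
    refine iSup_le fun χ => ?_
    obtain ⟨n, hn⟩ := exists_intCast_eq_weight_apply t χ
    exact le_iSup_of_le n (le_iSup₂_of_le χ (by simpa using hn) le_rfl)
  have hfilter : (Finset.univ.filter fun χ : Weight K H L => χ h = k) =
      H.root.filter fun α => α h = (k : K) := by
    ext χ
    simp only [Finset.mem_filter, Finset.mem_univ, true_and, LieSubalgebra.root]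
    refine ⟨fun hχ => ⟨fun hzero => hk ?_, hχ⟩, fun hχ => hχ.2⟩
    rwa [hzero, Pi.zero_apply, eq_comm, Int.cast_eq_zero] at hχ
  rw [← eq_of_iSupIndep_of_iSup_eq_top (iSupIndep_weightPiece K L (h : L)) (fun n =>
    iSup₂_le fun χ hχ => rootSpace_le_weightPiece (by simpa using hχ)) htop k,
    finrank_biSup_eq_sum (iSupIndep_rootSpace H), hfilter, Finset.card_eq_sum_ones]
  exact Finset.sum_congr rfl fun χ hχ =>
    IsKilling.finrank_rootSpace_eq_one χ (by simpa using (Finset.mem_filter.1 hχ).1)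

lemma weight_apply_ne_zero (hH : H.toSubmodule = weightPiece K L (h : L) 0) {χ : Weight K H L}
    (hχ : χ.IsNonZero) : χ h ≠ 0 := by
  intro h0
  have hle : rootSpace H χ ≤ rootSpace H (0 : H → K) := by
    rw [rootSpace_zero_eq K L H]
    exact (rootSpace_le_weightPiece (k := 0) (by simpa using h0)).trans hH.ge
  exact χ.genWeightSpace_ne_bot'
    (disjoint_self.1 ((disjoint_genWeightSpace K H L hχ).mono_right hle))

lemma weightPiece_one_eq_bot_of_isCartanSubalgebra (t : IsSl2Triple (h : L) e f)
    (hH : H.toSubmodule = weightPiece K L (h : L) 0) (hrank : finrank K H = 2)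
    (htwo : finrank K (weightPiece K L (h : L) 2) = 2) : weightPiece K L (h : L) 1 = ⊥ := by
  classical
  obtain ⟨r, hr⟩ := exists_addMonoidHom_rat_apply_intCast K
  let height : Dual K H →+ ℚ := r.comp (Dual.eval K H h).toAddMonoidHom
  have hheight {α : H.root} {n : ℤ} (hn : (α : Weight K H L) h = n) :
      height (IsKilling.rootSystem H |>.root α) = n := (congrArg r hn).trans (hr n)
  have hint (α : H.root) : ∃ n : ℤ, height (IsKilling.rootSystem H |>.root α) = n :=
    (exists_intCast_eq_weight_apply t (α : Weight K H L)).imp fun n hn => hheight hn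
  have hne (α : H.root) : height (IsKilling.rootSystem H |>.root α) ≠ 0 := by
    obtain ⟨n, hn⟩ := exists_intCast_eq_weight_apply t (α : Weight K H L)
    rw [hheight hn, Int.cast_ne_zero]
    rintro rfl
    exact weight_apply_ne_zero hH (Finset.mem_filter_univ _ |>.1 α.2) (by simpa using hn)
  rw [finrank_weightPiece_eq_card_root t two_ne_zero, Finset.card_eq_two] at htwo
  obtain ⟨α, β, hαβ, hfilter⟩ := htwo
  obtain ⟨hα, hα2⟩ := Finset.mem_filter.1 (hfilter.ge (Finset.mem_insert_self α {β}))
  obtain ⟨hβ, hβ2⟩ := Finset.mem_filter.1 (hfilter.ge (Finset.mem_insert_of_mem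
    (Finset.mem_singleton_self β)))
  rw [← Submodule.finrank_eq_zero (R := K), finrank_weightPiece_eq_card_root t one_ne_zero,
    Finset.card_eq_zero, Finset.filter_eq_empty_iff]
  intro γ hγ hγ1
  exact apply_root_ne_one_of_two_roots_apply_eq_two
    (Subspace.dual_finrank_eq.trans hrank) hne hint (i := ⟨α, hα⟩) (j := ⟨β, hβ⟩)
    (by simpa using hαβ) (hheight hα2) (hheight hβ2) ⟨γ, hγ⟩
    (by simpa using hheight (α := ⟨γ, hγ⟩) hγ1)

end RootHeights

lemma finrank_ker_toEnd_e_eq_rank {K L : Type*} [Field K] [CharZero K] [IsAlgClosed K] [LieRing L]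
    [LieAlgebra K L] [FiniteDimensional K L] [LieAlgebra.IsKilling K L] {h e f : L}
    (t : IsSl2Triple h e f) (hL : 3 < finrank K L) (hzero : finrank K (weightPiece K L h 0) = 2)
    (htwo : finrank K (weightPiece K L h 2) = 2) :
    finrank K (LinearMap.ker (LieModule.toEnd K L L e)) = LieAlgebra.rank K L := by
  have hengel := engel_toSubmodule_eq_weightPiece_zero (K := K) t
  have hfinrank : finrank K (LieSubalgebra.engel K h) = 2 :=
    (congrArg (fun p : Submodule K L => finrank K p) hengel).trans hzero
  have hrank : LieAlgebra.rank K L = 2 :=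
    le_antisymm ((LieAlgebra.rank_le_finrank_engel K h).trans hfinrank.le) (two_le_rank hL)
  have hregular : LieAlgebra.IsRegular K h :=
    (LieAlgebra.isRegular_iff_finrank_engel_eq_rank K h).2 (hfinrank.trans hrank.symm)
  have := isCartanSubalgebra_engel_of_isRegular hregular
  have hone : weightPiece K L h 1 = ⊥ := weightPiece_one_eq_bot_of_isCartanSubalgebra
    (h := ⟨h, LieSubalgebra.self_mem_engel K h⟩) t hengel hfinrank htwo
  rw [finrank_ker_toEnd_e K L t, hone, finrank_bot, hzero, hrank]

section Stabilizer

variable {K L M : Type*} [CommRing K] [LieRing L] [LieAlgebra K L] [AddCommGroup M] [Module K M]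
  [LieRingModule L M] [LieModule K L M]

variable (L) in
/-- The Lie subalgebra of all elements of `L` which map the subspace `p` of the `L`-module `M` to
itself. -/
def stabilizer (p : Submodule K M) : LieSubalgebra K L where
  carrier := {x | ∀ v ∈ p, ⁅x, v⁆ ∈ p}
  add_mem' hx hy v hv := by
    rw [add_lie]
    exact add_mem (hx v hv) (hy v hv)
  zero_mem' v _ := by
    rw [zero_lie]
    exact zero_mem p
  smul_mem' c x hx v hv := by
    rw [smul_lie]
    exact p.smul_mem c (hx v hv)
  lie_mem' {x y} hx hy v hv := by
    rw [lie_lie]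
    exact sub_mem (hx _ (hy v hv)) (hy _ (hx v hv))

lemma lieSpan_singleton_le_lieSpan_subalgebra (A : LieSubalgebra K L) (v : M)
    (hv : ∀ x : L, ∃ y ∈ A, ⁅x, v⁆ = ⁅y, v⁆) :
    (LieSubmodule.lieSpan K L {v}).toSubmodule ≤ (LieSubmodule.lieSpan K A {v}).toSubmodule := by
  have hlie (w : M) (hw : w ∈ LieSubmodule.lieSpan K A {v}) (x : L) :
      ⁅x, w⁆ ∈ LieSubmodule.lieSpan K A {v} := by
    induction hw using LieSubmodule.lieSpan_induction generalizing x with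
    | mem w hw =>
      obtain rfl : w = v := hw
      obtain ⟨y, hy, hxy⟩ := hv x
      rw [hxy]
      exact LieSubmodule.lie_mem _ (x := (⟨y, hy⟩ : A)) (LieSubmodule.subset_lieSpan rfl)
    | zero => simp
    | add w₁ w₂ _ _ h₁ h₂ => exact lie_add x w₁ w₂ ▸ add_mem (h₁ x) (h₂ x)
    | smul c w _ hw => exact lie_smul c x w ▸ Submodule.smul_mem _ c (hw x)
    | lie y w _ hw =>
      change ⁅x, ⁅(y : L), w⁆⁆ ∈ _
      rw [leibniz_lie]
      exact add_mem (hw _) (LieSubmodule.lie_mem _ (x := y) (hw x))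
  exact LieSubmodule.lieSpan_le (N := { (LieSubmodule.lieSpan K A {v}).toSubmodule with
    lie_mem := fun {x w} hw => hlie w hw x }).2 LieSubmodule.subset_lieSpan

lemma lieSpan_singleton_le_of_exists_mem_stabilizer {p : Submodule K M} {v : M} (hvp : v ∈ p)
    (hv : ∀ x : L, ∃ y ∈ stabilizer L p, ⁅x, v⁆ = ⁅y, v⁆) :
    (LieSubmodule.lieSpan K L {v}).toSubmodule ≤ p :=
  (lieSpan_singleton_le_lieSpan_subalgebra _ v hv).trans <|
    LieSubmodule.lieSpan_le (N := { p with lie_mem := fun {x w} hw => x.2 w hw }).2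
      (Set.singleton_subset_iff.2 hvp)

end Stabilizer

section HighestWeight

variable {K L M : Type*} [Field K] [LieRing L] [LieAlgebra K L] [AddCommGroup M] [Module K M]
  [LieRingModule L M] [LieModule K L M] {h e f x : L} {v : M} {i j : ℤ}

lemma mem_stabilizer_biSup_weightPiece (hi : i ≤ 0) (hx : x ∈ weightPiece K L h i) :
    x ∈ stabilizer L (⨆ k ≤ j, weightPiece K M h k) := fun v hv => by
  induction hv using Submodule.iSup_induction' with
  | mem k v hv =>
    by_cases hk : k ≤ j
    · rw [iSup_pos hk] at hv
      exact Submodule.mem_iSup_of_mem (i + k)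
        (Submodule.mem_iSup_of_mem (by omega) (lie_mem_weightPiece hx hv))
    · rw [iSup_neg hk, Submodule.mem_bot] at hv
      simp [hv]
  | zero => simp
  | add v w _ _ hv hw => exact lie_add x v w ▸ add_mem hv hw

lemma weightPiece_eq_bot_of_lie_weightPiece_eq_zero [CharZero K] [FiniteDimensional K L]
    [LieModule.IsIrreducible K L M] (t : IsSl2Triple h e f)
    (hv : v ∈ weightPiece K M h i) (hv0 : v ≠ 0)
    (hlie : ∀ k > 0, ∀ x ∈ weightPiece K L h k, ⁅x, v⁆ = 0) (hij : i < j) :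
    weightPiece K M h j = ⊥ := by
  let p : Submodule K M := ⨆ k ≤ i, weightPiece K M h k
  have hvp : v ∈ p := Submodule.mem_iSup_of_mem i (Submodule.mem_iSup_of_mem le_rfl hv)
  have hstab (x : L) : ∃ y ∈ stabilizer L p, ⁅x, v⁆ = ⁅y, v⁆ := by
    have hx : x ∈ ⨆ k, weightPiece K L h k := by simp [iSup_weightPiece t]
    induction hx using Submodule.iSup_induction' with
    | mem k x hx =>
      obtain hk | hk := le_or_gt k 0
      · exact ⟨x, mem_stabilizer_biSup_weightPiece hk hx, rfl⟩
      · exact ⟨0, zero_mem _, by rw [hlie k hk x hx, zero_lie]⟩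
    | zero => exact ⟨0, zero_mem _, rfl⟩
    | add x₁ x₂ _ _ h₁ h₂ =>
      obtain ⟨y₁, hy₁, h₁⟩ := h₁
      obtain ⟨y₂, hy₂, h₂⟩ := h₂
      exact ⟨y₁ + y₂, add_mem hy₁ hy₂, by rw [add_lie, add_lie, h₁, h₂]⟩
  have hspan : LieSubmodule.lieSpan K L {v} = ⊤ :=
    (eq_bot_or_eq_top _).resolve_left fun hbot =>
      hv0 ((LieSubmodule.lieSpan_eq_bot_iff K L M).1 hbot v rfl)
  have hp : p = ⊤ := top_le_iff.1 <|
    calc (⊤ : Submodule K M) = (LieSubmodule.lieSpan K L {v}).toSubmodule := by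
          rw [hspan, LieSubmodule.top_toSubmodule]
      _ ≤ p := lieSpan_singleton_le_of_exists_mem_stabilizer hvp hstab
  refine disjoint_top.1 (hp ▸ ((iSupIndep_weightPiece K M h) j).mono_right ?_)
  exact iSup₂_le fun k hk => le_iSup₂_of_le k (by omega) le_rfl

end HighestWeight

section Subregular

open LieAlgebra

section

variable {K L : Type*} [Field K] [CharZero K] [LieRing L] [LieAlgebra K L] [FiniteDimensional K L]
  {h e f u v z : L}

lemma ker_toEnd_e_le_weightPiece_sup (t : IsSl2Triple h e f)
    (hzero : LinearMap.ker (LieModule.toEnd K L L e) ⊓ weightPiece K L h 0 = ⊥)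
    (hone : weightPiece K L h 1 = ⊥) (hlarge : ∀ k > 4, weightPiece K L h k = ⊥) :
    LinearMap.ker (LieModule.toEnd K L L e) ≤ weightPiece K L h 2 ⊔ weightPiece K L h 4 := by
  have hker (v : L) (hv : v ∈ LinearMap.ker (LieModule.toEnd K L L e)) :
      ⁅h, v⁆ ∈ LinearMap.ker (LieModule.toEnd K L L e) := by
    rw [LinearMap.mem_ker, LieModule.toEnd_apply_apply] at hv ⊢
    simpa [hv] using (lie_h_lie_e K t v).symm
  rw [← iSup_weightPiece_inf_eq t hker]
  refine iSup_le fun k v hv => ?_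
  obtain hk | rfl | rfl | rfl | rfl | rfl | hk :
    k < 0 ∨ k = 0 ∨ k = 1 ∨ k = 2 ∨ k = 3 ∨ k = 4 ∨ k > 4 := by omega
  · rw [eq_zero_of_lie_e_eq_zero t hk hv.2 hv.1]
    exact zero_mem _
  · rw [hzero, Submodule.mem_bot] at hv
    exact hv ▸ zero_mem _
  · rw [hone, inf_bot_eq, Submodule.mem_bot] at hv
    exact hv ▸ zero_mem _
  · exact Submodule.mem_sup_left hv.2
  · rw [show (3 : ℤ) = 1 + 2 * (1 : ℕ) by norm_num,
      weightPiece_add_two_mul_eq_bot t (by norm_num) hone 1, inf_bot_eq, Submodule.mem_bot] at hv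
    exact hv ▸ zero_mem _
  · exact Submodule.mem_sup_right hv.2
  · rw [hlarge k hk, inf_bot_eq, Submodule.mem_bot] at hv
    exact hv ▸ zero_mem _

lemma eq_zero_of_lie_weightPiece_two_eq_zero [LieModule.IsIrreducible K L L]
    (t : IsSl2Triple h e f) (hone : weightPiece K L h 1 = ⊥) (hfour : weightPiece K L h 4 ≠ ⊥)
    (hlarge : ∀ k > 4, weightPiece K L h k = ⊥) (hu : u ∈ weightPiece K L h 2)
    (hlie : ∀ y ∈ weightPiece K L h 2, ⁅y, u⁆ = 0) : u = 0 := by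
  by_contra hu0
  refine hfour (weightPiece_eq_bot_of_lie_weightPiece_eq_zero t hu hu0 (fun k hk x hx => ?_)
    (by norm_num))
  obtain rfl | rfl | hk2 : k = 1 ∨ k = 2 ∨ 2 < k := by omega
  · rw [hone, Submodule.mem_bot] at hx
    rw [hx, zero_lie]
  · exact hlie x hx
  · rw [← Submodule.mem_bot K, ← hlarge (k + 2) (by omega)]
    exact lie_mem_weightPiece hx hu

/-- Both `ad e` and `ad u` map `𝔤₂` to the line `𝔤₄`, so the inclusion of kernels makes them
proportional there. -/
lemma exists_eq_smul_e_of_lie_eq_zero [LieModule.IsIrreducible K L L] (t : IsSl2Triple h e f)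
    (hone : weightPiece K L h 1 = ⊥) (hlarge : ∀ k > 4, weightPiece K L h k = ⊥)
    (hz0 : z ≠ 0) (hspan : weightPiece K L h 4 = Submodule.span K {z})
    (hu : u ∈ weightPiece K L h 2)
    (hlie : ∀ y ∈ weightPiece K L h 2, ⁅e, y⁆ = 0 → ⁅u, y⁆ = 0) : ∃ r : K, u = r • e := by
  have hz : z ∈ weightPiece K L h 4 := hspan ▸ Submodule.mem_span_singleton_self z
  have he : e ∈ weightPiece K L h 2 := e_mem_weightPiece_two t
  have hmul {x y : L} (hx : x ∈ weightPiece K L h 2) (hy : y ∈ weightPiece K L h 2) :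
      ∃ c : K, c • z = ⁅x, y⁆ := by
    rw [← Submodule.mem_span_singleton, ← hspan, show (4 : ℤ) = 2 + 2 from rfl]
    exact lie_mem_weightPiece hx hy
  obtain ⟨p, hp, hep⟩ := exists_lie_e_eq t (by norm_num) hz
  obtain ⟨r, hr⟩ := hmul hu hp
  refine ⟨r, sub_eq_zero.1 (eq_zero_of_lie_weightPiece_two_eq_zero t hone
    (fun hbot => hz0 ((Submodule.mem_bot K).1 (hbot ▸ hz))) hlarge
    (sub_mem hu (Submodule.smul_mem _ r he)) fun y hy => ?_)⟩
  obtain ⟨q, hq⟩ := hmul he hy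
  have huy : ⁅u, y - q • p⁆ = 0 :=
    hlie _ (sub_mem hy (Submodule.smul_mem _ q hp)) (by rw [lie_sub, lie_smul, hep, hq, sub_self])
  rw [lie_sub, lie_smul, sub_eq_zero, ← hr] at huy
  rw [← lie_skew, sub_lie, smul_lie, huy, ← hq, smul_comm, sub_self, neg_zero]

end

variable {L : Type*} [LieRing L] [LieAlgebra ℂ L] {h e f z : L}

lemma zCenter_eq_span_pair [FiniteDimensional ℂ L] [LieModule.IsIrreducible ℂ L L]
    (t : IsSl2Triple h e f)
    (hzero : LinearMap.ker (LieModule.toEnd ℂ L L e) ⊓ weightPiece ℂ L h 0 = ⊥)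
    (hone : weightPiece ℂ L h 1 = ⊥) (hlarge : ∀ k > 4, weightPiece ℂ L h k = ⊥)
    (hz0 : z ≠ 0) (hspan : weightPiece ℂ L h 4 = Submodule.span ℂ {z}) :
    zCenter L e = Submodule.span ℂ {e, z} := by
  have hz : z ∈ weightPiece ℂ L h 4 := hspan ▸ Submodule.mem_span_singleton_self z
  have hz_lie {y : L} (hy : y ∈ weightPiece ℂ L h 2) : ⁅z, y⁆ = 0 := by
    rw [← Submodule.mem_bot ℂ, ← hlarge (4 + 2) (by norm_num)]
    exact lie_mem_weightPiece hz hy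
  have hdecomp {y : L} (hy : ⁅y, e⁆ = 0) : ∃ y₂ ∈ weightPiece ℂ L h 2, ∃ c : ℂ, y₂ + c • z = y := by
    have hy_ker : y ∈ LinearMap.ker (LieModule.toEnd ℂ L L e) := by
      rw [LinearMap.mem_ker, LieModule.toEnd_apply_apply, ← lie_skew, hy, neg_zero]
    obtain ⟨y₂, hy₂, y₄, hy₄, hsum⟩ := Submodule.mem_sup.1
      (ker_toEnd_e_le_weightPiece_sup t hzero hone hlarge hy_ker)
    obtain ⟨c, rfl⟩ := Submodule.mem_span_singleton.1 (hspan ▸ hy₄)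
    exact ⟨y₂, hy₂, c, hsum⟩
  have hz_center : z ∈ zCenter L e := by
    refine ⟨hz_lie (e_mem_weightPiece_two t), fun y hy => ?_⟩
    obtain ⟨y₂, hy₂, c, rfl⟩ := hdecomp hy
    rw [lie_add, hz_lie hy₂, lie_smul, lie_self, smul_zero, add_zero]
  have he_center : e ∈ zCenter L e :=
    ⟨lie_self e, fun y hy => by rw [← lie_skew, hy, neg_zero]⟩
  refine le_antisymm (fun v hv => ?_)
    (Submodule.span_le.2 (Set.insert_subset he_center (Set.singleton_subset_iff.2 hz_center)))
  obtain ⟨v₂, hv₂, b, rfl⟩ := hdecomp hv.1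
  have hv₂_center : v₂ ∈ zCenter L e :=
    (Submodule.add_mem_iff_left _ (Submodule.smul_mem _ b hz_center)).1 hv
  obtain ⟨a, rfl⟩ := exists_eq_smul_e_of_lie_eq_zero t hone hlarge hz0 hspan hv₂ fun y _ hy =>
    hv₂_center.2 y (by rw [← lie_skew, hy, neg_zero])
  exact Submodule.mem_span_pair.2 ⟨a, b, rfl⟩

lemma exists_lie_lie_f_eq_smul (t : IsSl2Triple h e f) (hz : z ∈ weightPiece ℂ L h 4)
    (hze : ⁅z, e⁆ = 0) (hfz : ⁅⁅f, z⁆, z⁆ = 0) {a b : ℂ} (hab : a ≠ 0 ∨ b ≠ 0) (c : ℂ) :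
    ∃ x : L, ⁅x, e⁆ = 0 ∧ ⁅⁅f, x⁆, a • e + b • z⁆ = c • z := by
  have hfe : ⁅f, e⁆ = -h := by rw [← lie_skew, t.lie_e_f]
  have hhz : ⁅h, z⁆ = (4 : ℂ) • z := by simpa using mem_weightPiece.1 hz
  by_cases ha : a = 0
  · have hb : b ≠ 0 := hab.resolve_left (not_not.2 ha)
    refine ⟨(-c / (4 * b)) • e, by rw [smul_lie, lie_self, smul_zero], ?_⟩
    rw [ha, zero_smul, zero_add, lie_smul, lie_smul, smul_lie, hfe, neg_lie, hhz]
    match_scalars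
    field_simp
  · have hfze : ⁅⁅f, z⁆, e⁆ = (-4 : ℂ) • z := by
      rw [lie_lie, hze, lie_zero, zero_sub, hfe, lie_neg, neg_neg, ← lie_skew, hhz, neg_smul]
    refine ⟨(-c / (4 * a)) • z, by rw [smul_lie, hze, smul_zero], ?_⟩
    rw [lie_smul, smul_lie, lie_add, lie_smul, lie_smul, hfz, hfze]
    match_scalars
    field_simp

lemma eq_two_or_eq_four_of_lie_eq_smul {m : ℂ} {w : L} (t : IsSl2Triple h e f)
    (hz : z ∈ weightPiece ℂ L h 4) (hw : w ∈ Submodule.span ℂ {e, z}) (hw0 : w ≠ 0)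
    (hm : ⁅h, w⁆ = m • w) : m = 2 ∨ m = 4 := by
  obtain ⟨a, b, rfl⟩ := Submodule.mem_span_pair.1 hw
  have hhz : ⁅h, z⁆ = (4 : ℂ) • z := by simpa using mem_weightPiece.1 hz
  have hquad : ((m - 2) * (m - 4)) • (a • e + b • z) = 0 :=
    calc _ = ⁅h, ⁅h, a • e + b • z⁆⁆ - (6 : ℂ) • ⁅h, a • e + b • z⁆
          + (8 : ℂ) • (a • e + b • z) := by
            rw [hm, lie_smul, hm]
            module
      _ = 0 := by
        simp only [lie_add, lie_smul, t.lie_h_e_smul ℂ, hhz]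
        module
  rw [smul_eq_zero, mul_eq_zero, sub_eq_zero, sub_eq_zero] at hquad
  exact hquad.resolve_right hw0

lemma mem_span_singleton_of_lie_eq_four_smul (t : IsSl2Triple h e f)
    (hz : z ∈ weightPiece ℂ L h 4) {y : L} (hy : y ∈ Submodule.span ℂ {e, z})
    (hhy : ⁅h, y⁆ = (4 : ℂ) • y) : y ∈ Submodule.span ℂ {z} := by
  obtain ⟨a, b, rfl⟩ := Submodule.mem_span_pair.1 hy
  have hhz : ⁅h, z⁆ = (4 : ℂ) • z := by simpa using mem_weightPiece.1 hz
  have hae : (2 : ℂ) • a • e = 0 :=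
    calc _ = (4 : ℂ) • (a • e + b • z) - ⁅h, a • e + b • z⁆ := by
          rw [lie_add, lie_smul, lie_smul, t.lie_h_e_smul ℂ, hhz]
          module
      _ = 0 := sub_eq_zero.2 hhy.symm
  rw [(smul_eq_zero.1 hae).resolve_left two_ne_zero, zero_add]
  exact Submodule.smul_mem _ b (Submodule.mem_span_singleton_self z)

lemma propertyP_of_zCenter_eq_span_pair (t : IsSl2Triple h e f) (hz : z ∈ weightPiece ℂ L h 4)
    (hz0 : z ≠ 0) (hfz : ⁅⁅f, z⁆, z⁆ = 0) (hspan : zCenter L e = Submodule.span ℂ {e, z}) :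
    PropertyP L e h f := by
  have hz_center : z ∈ zCenter L e := hspan ▸ Submodule.mem_span_pair.2 ⟨0, 1, by simp⟩
  have hhz : ⁅h, z⁆ = (4 : ℂ) • z := by simpa using mem_weightPiece.1 hz
  rintro m ⟨w, hw0, hw, hwm⟩ hmax v hv hv0 y hy hym
  obtain rfl : m = 4 := by
    refine (eq_two_or_eq_four_of_lie_eq_smul t hz (hspan.le hw) hw0 hwm).resolve_left ?_
    rintro rfl
    have hle := (Complex.le_def.1 (hmax 4 ⟨z, hz0, hz_center, hhz⟩)).1
    norm_num at hle
  obtain ⟨a, b, rfl⟩ := Submodule.mem_span_pair.1 (hspan.le hv)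
  obtain ⟨c, rfl⟩ := Submodule.mem_span_singleton.1
    (mem_span_singleton_of_lie_eq_four_smul t hz (hspan.le hy) hym)
  refine exists_lie_lie_f_eq_smul t hz hz_center.1 hfz ?_ c
  contrapose! hv0
  rw [hv0.1, hv0.2, zero_smul, zero_smul, add_zero]

lemma propertyP_of_finrank_weightPiece_zero_eq_four [FiniteDimensional ℂ L] [IsSimple ℂ L]
    (t : IsSl2Triple h e f) (he : IsDistinguished L e) (hdim : finrank ℂ L = 14)
    (hzero : finrank ℂ (weightPiece ℂ L h 0) = 4) : PropertyP L e h f := by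
  obtain ⟨⟨z, hz⟩, hz0, hspan_fin⟩ :=
    finrank_eq_one_iff'.1 (finrank_weightPiece_four_and_six t he hdim hzero).1
  have hz0 : z ≠ 0 := fun h0 => hz0 (Subtype.ext h0)
  have hspan : weightPiece ℂ L h 4 = Submodule.span ℂ {z} := by
    refine le_antisymm (fun y hy => ?_) (by simpa using hz)
    obtain ⟨c, hc⟩ := hspan_fin ⟨y, hy⟩
    exact Submodule.mem_span_singleton.2 ⟨c, congrArg Subtype.val hc⟩
  have hlarge (k : ℤ) (hk : k > 4) : weightPiece ℂ L h k = ⊥ :=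
    weightPiece_eq_bot_of_four_lt t he hdim hzero hk
  have hfz : ⁅⁅f, z⁆, z⁆ = 0 := by
    rw [← Submodule.mem_bot ℂ, ← hlarge (-2 + 4 + 4) (by norm_num)]
    exact lie_mem_weightPiece (lie_mem_weightPiece (f_mem_weightPiece_neg_two t) hz) hz
  exact propertyP_of_zCenter_eq_span_pair t hz hz0 hfz <| zCenter_eq_span_pair t
    (ker_ad_e_inf_weightPiece_zero t he) (weightPiece_one_eq_bot t he hdim hzero) hlarge hz0 hspan

lemma finrank_centralizer (L : Type*) [LieRing L] [LieAlgebra ℂ L] (e : L) :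
    finrank ℂ (centralizer L e) = finrank ℂ (LinearMap.ker (LieModule.toEnd ℂ L L e)) := by
  have heq : (centralizer L e).toSubmodule = LinearMap.ker (LieModule.toEnd ℂ L L e) := by
    ext x
    change ⁅x, e⁆ = 0 ↔ ⁅e, x⁆ = 0
    rw [← lie_skew, neg_eq_zero]
  exact congrArg (fun p : Submodule ℂ L => finrank ℂ p) heq

end Subregular

/-- Distinguished non-regular nilpotent elements of the complex simple
Lie algebra of type corresponding to `LieAlgebra.g₂` satisfy property (P). -/
theorem propertyP_of_type_9
    (L : Type*) [LieRing L] [LieAlgebra ℂ L] [FiniteDimensional ℂ L]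
    [LieAlgebra.IsSimple ℂ L]
    (htype : Nonempty (L ≃ₗ⁅ℂ⁆ LieAlgebra.g₂ ℂ))
    (e h f : L) (ht : IsSl2Triple h e f) (he : IsNilpotent (LieAlgebra.ad ℂ L e))
    (hdist : IsDistinguished L e)
    (hnonreg : Module.finrank ℂ ↥(centralizer L e) ≠ LieAlgebra.rank ℂ L) :
    PropertyP L e h f := by
  obtain ⟨φ⟩ := htype
  have hdim : finrank ℂ L = 14 := finrank_eq_fourteen_of_equiv_g₂ φ
  obtain hzero | hzero := finrank_weightPiece_zero_eq_two_or_four ht hdist hdim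
  · refine (hnonreg ?_).elim
    rw [finrank_centralizer]
    exact finrank_ker_toEnd_e_eq_rank ht (by omega) hzero
      ((finrank_weightPiece_two_of_isDistinguished ht hdist).trans hzero)
  · exact propertyP_of_finrank_weightPiece_zero_eq_four ht hdist hdim hzero
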